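/- arXiv:2505.19664 — 2 statements merged into one kernel-verified Lean document; each statement's English description precedes it below -/
import Mathlib

section
/- Let G, G' : [0,1]×[0,1] → [0,∞) be graphons (measurable, symmetric, bounded) with ‖G‖_∞ ≤ M, ‖G'‖_∞ ≤ M and with degrees bounded below by c > 0, and let (μ^u)_{u∈[0,1]}, (μ'^u)_{u∈[0,1]} be setwise measurable families of Borel probability measures on ℝ^d with ∫ |x|² dμ^u(x) ≤ K and ∫ |x|² dμ'^u(x) ≤ K for every u ∈ [0,1]. Then there exists a constant C, depending only on M, c and K, such that ∫₀¹ W₂²([Gμ]^u, [G'μ']^u) du ≤ C ( ∫₀¹∫₀¹ |G(u,v) − G'(u,v)| dv du + ∫₀¹ W₂²(μ^u, μ'^u) du ), where the integrals of Wasserstein distances are upper Lebesgue integrals. -/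
open MeasureTheory ENNReal

noncomputable section

/-- The normalized graphon `G̃(u,v) = G(u,v) / ∫₀¹ G(u,w) dw`. -/
def gnorm (G : ℝ → ℝ → ℝ) (u v : ℝ) : ℝ :=
  G u v / ∫ w in Set.Icc (0:ℝ) 1, G u w

/-- The squared 2-Wasserstein distance, as the infimum over couplings of the integral of the
squared distance (valued in `ℝ≥0∞`). -/
def W2sq {E : Type*} [NormedAddCommGroup E] [MeasurableSpace E]
    (μ ν : Measure E) : ℝ≥0∞ :=
  ⨅ (π : Measure (E × E)) (_ : IsProbabilityMeasure π)
    (_ : π.map Prod.fst = μ) (_ : π.map Prod.snd = ν),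
    ∫⁻ p, (‖p.1 - p.2‖₊ : ℝ≥0∞) ^ 2 ∂π

/-- The upper Lebesgue integral of an `ℝ≥0∞`-valued function. -/
def upperLintegral {α : Type*} [MeasurableSpace α] (m : Measure α) (f : α → ℝ≥0∞) : ℝ≥0∞ :=
  ⨅ (g : α → ℝ≥0∞) (_ : Measurable g) (_ : ∀ x, f x ≤ g x), ∫⁻ x, g x ∂m

/-- `ν` is the graphon aggregate family `[Gμ]` of the family `μ`. -/
def IsGraphonAggregate {E : Type*} [MeasurableSpace E] (G : ℝ → ℝ → ℝ)
    (μ ν : ℝ → Measure E) : Prop :=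
  ∀ u ∈ Set.Icc (0:ℝ) 1, IsProbabilityMeasure (ν u) ∧
    ∀ B : Set E, MeasurableSet B →
      ν u B = ∫⁻ v in Set.Icc (0:ℝ) 1, ENNReal.ofReal (gnorm G u v) * μ v B

/-!
The aggregate `[Gμ]^u` is the mixture of the measures `μ^v` with weights `G̃(u, v) dv`. The two
normalized rows have a common part `min (G̃(u, ·)) (G̃'(u, ·))`, along which `μ^v` is transported to
`μ'^v`, and excesses of equal mass at most `‖G(u, ·) - G'(u, ·)‖₁ / c`, which are coupled
arbitrarily at a cost controlled by the second moments.

The common part needs convexity of the transport cost under mixtures, where `v ↦ W₂²(μ^v, μ'^v)` may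
fail to be measurable, so measurable selection of optimal plans is avoided. On a countable space a
plan is exhausted from below by finitely supported rational measures, up to a remainder of small
cost. There are countably many of these, so almost optimal ones can be chosen measurably in `v`, and
the remainders are transported arbitrarily after mixing. A general space reduces to a countable one
by partitioning it into countably many cells of small diameter.
-/

open ProbabilityTheory Filter
open scoped NNReal Topology

section ExtendedNonnegative

lemma le_of_forall_pos_le_add_mul {a b C : ℝ≥0∞} (hC : C ≠ ∞)
    (h : ∀ η : ℝ≥0, 0 < η → a ≤ b + η * C) : a ≤ b := by
  have key : Tendsto (fun η : ℝ≥0 => b + η * C) (𝓝[>] 0) (𝓝 b) := by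
    have : Tendsto (fun η : ℝ≥0 => (η : ℝ≥0∞)) (𝓝[>] 0) (𝓝 0) :=
      (ENNReal.tendsto_coe.2 tendsto_id).mono_left nhdsWithin_le_nhds
    simpa only [zero_mul, add_zero] using
      (ENNReal.Tendsto.mul_const this (.inr hC)).const_add b
  exact ge_of_tendsto key (eventually_mem_nhdsWithin.mono h)

end ExtendedNonnegative

section Lintegral

variable {α : Type*} [MeasurableSpace α]

lemma lintegral_tsub_comm {m : Measure α} {f g : α → ℝ≥0∞} (hf : AEMeasurable f m)
    (hg : AEMeasurable g m) (h : ∫⁻ x, f x ∂m = ∫⁻ x, g x ∂m) (hfin : ∫⁻ x, f x ∂m ≠ ∞) :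
    ∫⁻ x, (f x - g x) ∂m = ∫⁻ x, (g x - f x) ∂m := by
  refine (ENNReal.add_left_inj hfin).1 ?_
  calc ∫⁻ x, (f x - g x) ∂m + ∫⁻ x, f x ∂m
      = ∫⁻ x, (f x - g x + g x) ∂m := by rw [lintegral_add_right' _ hg, h]
    _ = ∫⁻ x, (g x - f x + f x) ∂m := by simp only [tsub_add_eq_max, max_comm]
    _ = ∫⁻ x, (g x - f x) ∂m + ∫⁻ x, f x ∂m := lintegral_add_right' _ hf

lemma measure_le_of_singleton_le [Countable α] [MeasurableSingletonClass α] {μ ν : Measure α}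
    (h : ∀ x, μ {x} ≤ ν {x}) : μ ≤ ν := by
  refine Measure.le_iff.2 fun s hs => ?_
  simp only [← Measure.tsum_indicator_apply_singleton _ s hs]
  exact ENNReal.tsum_le_tsum fun x => Set.indicator_le_indicator (h x)

end Lintegral

section UpperLintegral

variable {α : Type*} [MeasurableSpace α] {m : Measure α} {f : α → ℝ≥0∞}

lemma upperLintegral_le_lintegral_of_ae_le {g : α → ℝ≥0∞} (hg : Measurable g)
    (h : ∀ᵐ x ∂m, f x ≤ g x) : upperLintegral m f ≤ ∫⁻ x, g x ∂m := by
  classical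
  set N := toMeasurable m {x | ¬ f x ≤ g x}
  have hN : MeasurableSet N := measurableSet_toMeasurable _ _
  have hgN : ∀ᵐ x ∂m, N.piecewise (fun _ => ∞) g x = g x :=
    (measure_eq_zero_iff_ae_notMem.1 ((measure_toMeasurable _).trans h)).mono
      fun x hx => N.piecewise_eq_of_notMem _ _ hx
  refine (iInf₂_le_of_le _ (measurable_const.piecewise hN hg) <| iInf_le _ fun x => ?_).trans_eq
    (lintegral_congr_ae hgN)
  by_cases hx : x ∈ N
  · simp only [N.piecewise_eq_of_mem _ _ hx, le_top]
  · rw [N.piecewise_eq_of_notMem _ _ hx]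
    exact not_not.1 fun hfg => hx (subset_toMeasurable _ _ hfg)

lemma exists_measurable_ge_lintegral_eq_upperLintegral (m : Measure α) (f : α → ℝ≥0∞) :
    ∃ g : α → ℝ≥0∞, Measurable g ∧ (∀ x, f x ≤ g x) ∧ ∫⁻ x, g x ∂m = upperLintegral m f := by
  have approx (r : ℝ≥0∞) (hr : upperLintegral m f < r) :
      ∃ g : α → ℝ≥0∞, Measurable g ∧ (∀ x, f x ≤ g x) ∧ ∫⁻ x, g x ∂m < r := by
    simpa only [upperLintegral, iInf_lt_iff, exists_prop] using hr
  have le_of_ge {g : α → ℝ≥0∞} (hg : Measurable g) (hfg : ∀ x, f x ≤ g x) :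
      upperLintegral m f ≤ ∫⁻ x, g x ∂m :=
    upperLintegral_le_lintegral_of_ae_le hg (.of_forall hfg)
  obtain htop | hlt := eq_top_or_lt_top (upperLintegral m f)
  · exact ⟨fun _ => ∞, measurable_const, fun _ => le_top,
      (le_top.trans_eq htop.symm).antisymm (le_of_ge measurable_const fun _ => le_top)⟩
  obtain ⟨r, -, hr, hr_lim⟩ := exists_seq_strictAnti_tendsto' hlt
  choose g hg hfg hgr using fun n => approx (r n) (hr n).1
  have hfg_iInf (x : α) : f x ≤ ⨅ n, g n x := le_iInf fun n => hfg n x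
  refine ⟨fun x => ⨅ n, g n x, .iInf hg, hfg_iInf, le_antisymm ?_ (le_of_ge (.iInf hg) hfg_iInf)⟩
  exact ge_of_tendsto' hr_lim fun n => (lintegral_mono fun x => iInf_le _ n).trans (hgr n).le

end UpperLintegral

section TransportCost

variable {X Y X' Y' : Type*} [MeasurableSpace X] [MeasurableSpace Y] [MeasurableSpace X']
  [MeasurableSpace Y']

/-- The Kantorovich optimal transport cost between two measures for the cost function `c`, as an
infimum over couplings. The measures need not be probability measures, and the cost is `∞` when
their masses differ. -/
def transportCost (c : X × Y → ℝ≥0∞) (μ : Measure X) (ν : Measure Y) : ℝ≥0∞ :=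
  ⨅ (π : Measure (X × Y)) (_ : π.fst = μ) (_ : π.snd = ν), ∫⁻ z, c z ∂π

lemma transportCost_le_lintegral (c : X × Y → ℝ≥0∞) (π : Measure (X × Y)) :
    transportCost c π.fst π.snd ≤ ∫⁻ z, c z ∂π :=
  iInf₂_le_of_le π rfl (iInf_le _ rfl)

lemma exists_lintegral_lt_of_transportCost_lt {c : X × Y → ℝ≥0∞} {μ : Measure X} {ν : Measure Y}
    {r : ℝ≥0∞} (h : transportCost c μ ν < r) :
    ∃ π : Measure (X × Y), π.fst = μ ∧ π.snd = ν ∧ ∫⁻ z, c z ∂π < r := by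
  simpa only [transportCost, iInf_lt_iff, exists_prop] using h

lemma transportCost_add_le (c : X × Y → ℝ≥0∞) (μ₁ μ₂ : Measure X) (ν₁ ν₂ : Measure Y) :
    transportCost c (μ₁ + μ₂) (ν₁ + ν₂) ≤ transportCost c μ₁ ν₁ + transportCost c μ₂ ν₂ := by
  refine ENNReal.le_iInf_add_iInf fun π₁ π₂ => ?_
  simp only [ENNReal.iInf_add, ENNReal.add_iInf, le_iInf_iff]
  rintro rfl rfl rfl rfl
  simpa only [Measure.fst_add, Measure.snd_add, lintegral_add_measure] using
    transportCost_le_lintegral c (π₁ + π₂)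

lemma lintegral_add_fst_snd {f : X → ℝ≥0∞} {f' : Y → ℝ≥0∞} (hf : Measurable f)
    (hf' : Measurable f') (π : Measure (X × Y)) :
    ∫⁻ z, (f z.1 + f' z.2) ∂π = ∫⁻ x, f x ∂π.fst + ∫⁻ y, f' y ∂π.snd := by
  rw [lintegral_add_left (by fun_prop), Measure.fst, Measure.snd,
    lintegral_map hf measurable_fst, lintegral_map hf' measurable_snd]

lemma exists_fst_eq_snd_eq {μ : Measure X} {ν : Measure Y} [IsFiniteMeasure μ] [IsFiniteMeasure ν]
    (hmass : μ Set.univ = ν Set.univ) :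
    ∃ π : Measure (X × Y), π.fst = μ ∧ π.snd = ν := by
  obtain h0 | h0 := eq_or_ne (μ Set.univ) 0
  · obtain rfl : μ = 0 := Measure.measure_univ_eq_zero.1 h0
    obtain rfl : ν = 0 := Measure.measure_univ_eq_zero.1 (hmass ▸ h0)
    exact ⟨0, Measure.fst_zero, Measure.snd_zero⟩
  have hinv : (μ Set.univ)⁻¹ * μ Set.univ = 1 := ENNReal.inv_mul_cancel h0 (measure_ne_top _ _)
  refine ⟨(μ Set.univ)⁻¹ • μ.prod ν, ?_, ?_⟩
  · rw [Measure.fst, Measure.map_smul, Measure.map_fst_prod, ← hmass, smul_smul, hinv, one_smul]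
  · rw [Measure.snd, Measure.map_smul, Measure.map_snd_prod, smul_smul, hinv, one_smul]

lemma transportCost_le_lintegral_add {c : X × Y → ℝ≥0∞} {f : X → ℝ≥0∞} {f' : Y → ℝ≥0∞}
    (hf : Measurable f) (hf' : Measurable f') (hc : ∀ z, c z ≤ f z.1 + f' z.2) {μ : Measure X}
    {ν : Measure Y} [IsFiniteMeasure μ] [IsFiniteMeasure ν] (hmass : μ Set.univ = ν Set.univ) :
    transportCost c μ ν ≤ ∫⁻ x, f x ∂μ + ∫⁻ y, f' y ∂ν := by
  obtain ⟨π, rfl, rfl⟩ := exists_fst_eq_snd_eq hmass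
  exact (transportCost_le_lintegral c π).trans <|
    (lintegral_mono hc).trans_eq (lintegral_add_fst_snd hf hf' π)

lemma transportCost_map_le {T : X → X'} {S : Y → Y'} (hT : Measurable T) (hS : Measurable S)
    (c : X' × Y' → ℝ≥0∞) (μ : Measure X) (ν : Measure Y) :
    transportCost c (μ.map T) (ν.map S) ≤ transportCost (c ∘ Prod.map T S) μ ν := by
  refine le_iInf fun π => le_iInf₂ fun hπ hπ' => ?_
  calc transportCost c (μ.map T) (ν.map S)
      = transportCost c (π.map (Prod.map T S)).fst (π.map (Prod.map T S)).snd := by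
        rw [Measure.fst, Measure.snd, Measure.map_map measurable_fst (hT.prodMap hS),
          Measure.map_map measurable_snd (hT.prodMap hS), ← hπ, ← hπ', Measure.fst, Measure.snd,
          Measure.map_map hT measurable_fst, Measure.map_map hS measurable_snd]
        rfl
    _ ≤ ∫⁻ z, c z ∂π.map (Prod.map T S) := transportCost_le_lintegral c _
    _ ≤ ∫⁻ z, c (Prod.map T S z) ∂π := lintegral_map_le _ _

end TransportCost

section Lifting

variable {X Y X' Y' : Type*} [MeasurableSpace X] [MeasurableSpace Y] [MeasurableSpace X']
  [MeasurableSpace Y']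

lemma map_bind_eq_bind_map_of_ae {p : Measure X} {F : X → Measure Y} {φ : Y → Y'} {ψ : X → X'}
    {K : X' → Measure Y'} (hF : AEMeasurable F p) (hφ : Measurable φ) (hψ : Measurable ψ)
    (hK : Measurable K) (h : ∀ᵐ x ∂p, (F x).map φ = K (ψ x)) :
    (p.bind F).map φ = (p.map ψ).bind K := by
  ext s hs
  rw [Measure.map_apply hφ hs, Measure.bind_apply (hφ hs) hF, Measure.bind_apply hs hK.aemeasurable,
    lintegral_map ((Measure.measurable_coe hs).fun_comp hK) hψ]
  refine lintegral_congr_ae (h.mono fun x hx => ?_)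
  simp only [← hx, Measure.map_apply hφ hs]

variable [MeasurableSingletonClass X']

lemma map_cond_preimage_singleton {T : X → X'} (hT : Measurable T) (μ : Measure X) {i : X'}
    [IsProbabilityMeasure μ[|T ⁻¹' {i}]] : μ[|T ⁻¹' {i}].map T = Measure.dirac i := by
  have hconst : T =ᵐ[μ[|T ⁻¹' {i}]] fun _ => i := ae_cond_mem (hT (measurableSet_singleton i))
  rw [Measure.map_congr hconst, Measure.map_const, measure_univ, one_smul]

variable [Countable X']

lemma bind_map_cond_preimage_singleton {T : X → X'} (hT : Measurable T) (μ : Measure X)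
    [IsFiniteMeasure μ] : (μ.map T).bind (fun i => μ[|T ⁻¹' {i}]) = μ := by
  ext s hs
  calc (μ.map T).bind (fun i => μ[|T ⁻¹' {i}]) s
      = ∑' i, μ[s|T ⁻¹' {i}] * μ (T ⁻¹' {i}) := by
        rw [Measure.bind_apply hs (measurable_of_countable _).aemeasurable, lintegral_countable']
        simp only [Measure.map_apply hT (measurableSet_singleton _)]
    _ = ∑' i, μ.restrict s (T ⁻¹' {i}) := by
        simp only [cond_mul_eq_inter (hT (measurableSet_singleton _)),
          Measure.restrict_apply (hT (measurableSet_singleton _))]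
    _ = μ s := by
        rw [← tsum_univ, tsum_measure_preimage_singleton Set.countable_univ
          fun _ _ => hT (measurableSet_singleton _), Set.preimage_univ, Measure.restrict_apply_univ]

lemma ae_isProbabilityMeasure_cond_preimage_singleton {T : X → X'} (hT : Measurable T)
    (μ : Measure X) [IsFiniteMeasure μ] : ∀ᵐ i ∂μ.map T, IsProbabilityMeasure μ[|T ⁻¹' {i}] := by
  refine ae_iff_of_countable.2 fun i hi => cond_isProbabilityMeasure ?_
  rwa [Measure.map_apply hT (measurableSet_singleton i)] at hi

variable [Countable Y'] [MeasurableSingletonClass Y']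

lemma transportCost_comp_prodMap_le {T : X → X'} {S : Y → Y'} (hT : Measurable T)
    (hS : Measurable S) (c : X' × Y' → ℝ≥0∞) (μ : Measure X) (ν : Measure Y) [IsFiniteMeasure μ]
    [IsFiniteMeasure ν] :
    transportCost (c ∘ Prod.map T S) μ ν ≤ transportCost c (μ.map T) (ν.map S) := by
  refine le_iInf fun p => le_iInf₂ fun hp hp' => ?_
  -- On each product of cells, the lift of `p` is the product of the conditional measures.
  set F : X' × Y' → Measure (X × Y) := fun z => μ[|T ⁻¹' {z.1}].prod ν[|S ⁻¹' {z.2}]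
  have hF : AEMeasurable F p := (measurable_of_countable F).aemeasurable
  have hprob : ∀ᵐ z ∂p, IsProbabilityMeasure μ[|T ⁻¹' {z.1}] :=
    ae_of_ae_map measurable_fst.aemeasurable
      (hp ▸ ae_isProbabilityMeasure_cond_preimage_singleton hT μ)
  have hprob' : ∀ᵐ z ∂p, IsProbabilityMeasure ν[|S ⁻¹' {z.2}] :=
    ae_of_ae_map measurable_snd.aemeasurable
      (hp' ▸ ae_isProbabilityMeasure_cond_preimage_singleton hS ν)
  have hfst : (p.bind F).fst = μ := by
    rw [Measure.fst, map_bind_eq_bind_map_of_ae hF measurable_fst measurable_fst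
      (measurable_of_countable fun i => μ[|T ⁻¹' {i}])
      (hprob'.mono fun z _ => Measure.fst_prod), ← Measure.fst, hp,
      bind_map_cond_preimage_singleton hT]
  have hsnd : (p.bind F).snd = ν := by
    rw [Measure.snd, map_bind_eq_bind_map_of_ae hF measurable_snd measurable_snd
      (measurable_of_countable fun j => ν[|S ⁻¹' {j}])
      (hprob.mono fun z _ => Measure.snd_prod), ← Measure.snd, hp',
      bind_map_cond_preimage_singleton hS]
  have hmap : (p.bind F).map (Prod.map T S) = p := by
    rw [map_bind_eq_bind_map_of_ae hF (hT.prodMap hS) measurable_id Measure.measurable_dirac,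
      Measure.map_id, Measure.bind_dirac]
    filter_upwards [hprob, hprob'] with z hz hz'
    rw [← Measure.map_prod_map _ _ hT hS, map_cond_preimage_singleton hT,
      map_cond_preimage_singleton hS, Measure.dirac_prod_dirac, id]
  calc transportCost (c ∘ Prod.map T S) μ ν
      = transportCost (c ∘ Prod.map T S) (p.bind F).fst (p.bind F).snd := by rw [hfst, hsnd]
    _ ≤ ∫⁻ z, c (Prod.map T S z) ∂p.bind F := transportCost_le_lintegral _ _
    _ = ∫⁻ z, c z ∂p := by
        rw [← lintegral_map (measurable_of_countable c) (hT.prodMap hS), hmap]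

end Lifting

section RationalMeasure

variable {Z : Type*} [MeasurableSpace Z]

/-- The finitely supported measure with rational weights `w`. Over a countable space these form a
countable family, from which measurable selections are made. -/
def rationalMeasure (w : Z →₀ ℚ≥0) : Measure Z :=
  Measure.sum fun z => (w z : ℝ≥0∞) • Measure.dirac z

lemma nnratCast_zero : ((0 : ℚ≥0) : ℝ≥0∞) = 0 := by
  rw [← ENNReal.coe_nnratCast, NNRat.cast_zero, ENNReal.coe_zero]

lemma rationalMeasure_zero : rationalMeasure (0 : Z →₀ ℚ≥0) = 0 := by
  simp only [rationalMeasure, Finsupp.coe_zero, Pi.zero_apply, nnratCast_zero, zero_smul,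
    Measure.sum_zero]

lemma exists_nnrat_seq_tendsto (x : ℝ≥0∞) :
    ∃ q : ℕ → ℚ≥0, (∀ n, (q n : ℝ≥0∞) ≤ x) ∧
      Tendsto (fun n => (q n : ℝ≥0∞)) atTop (𝓝 x) := by
  have hlub : IsLUB {y : ℝ≥0∞ | y ≤ x ∧ ∃ q : ℚ≥0, (q : ℝ≥0∞) = y} x := by
    refine ⟨fun y hy => hy.1, fun b hb => le_of_forall_lt fun a ha => ?_⟩
    obtain ⟨q, hq, haq, hqx⟩ := ENNReal.lt_iff_exists_rat_btwn.1 ha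
    lift q to ℚ≥0 using hq
    have hcast : Real.toNNReal (q : ℚ) = (q : ℝ≥0) :=
      NNReal.eq (by rw [Real.coe_toNNReal _ (by positivity)]; norm_cast)
    rw [hcast, ENNReal.coe_nnratCast] at haq hqx
    exact haq.trans_le (hb ⟨hqx.le, q, rfl⟩)
  obtain ⟨u, -, hux, hu, hmem⟩ :=
    hlub.exists_seq_monotone_tendsto ⟨0, zero_le, 0, nnratCast_zero⟩
  choose q hq using fun n => (hmem n).2
  exact ⟨q, fun n => (hq n).trans_le (hux n), by simpa only [hq] using hu⟩

variable [MeasurableSingletonClass Z]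

lemma rationalMeasure_singleton (w : Z →₀ ℚ≥0) (z : Z) :
    rationalMeasure w {z} = (w z : ℝ≥0∞) :=
  Measure.sum_smul_dirac_singleton

variable [Countable Z]

lemma lintegral_le_iSup_rationalMeasure (p : Measure Z) {W : Z → ℝ≥0∞} (hW : ∀ z, W z ≠ ∞) :
    ∫⁻ z, W z ∂p ≤ ⨆ (w : Z →₀ ℚ≥0) (_ : rationalMeasure w ≤ p), ∫⁻ z, W z ∂rationalMeasure w := by
  rw [lintegral_countable', ENNReal.tsum_eq_iSup_sum]
  refine iSup_le fun s => ?_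
  choose q hqle hqlim using fun z => exists_nnrat_seq_tendsto (p {z})
  set w : ℕ → Z →₀ ℚ≥0 := fun n => Finsupp.indicator s fun z _ => q z n
  have hw_le (n : ℕ) : rationalMeasure (w n) ≤ p := by
    refine measure_le_of_singleton_le fun z => ?_
    rw [rationalMeasure_singleton]
    by_cases hz : z ∈ s
    · simpa only [w, Finsupp.indicator_of_mem hz] using hqle z n
    · simp only [w, Finsupp.indicator_of_notMem hz, nnratCast_zero, zero_le]
  refine le_of_tendsto' (tendsto_finsetSum s fun z _ =>
    ENNReal.Tendsto.const_mul (hqlim z) (.inr (hW z))) fun n => ?_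
  calc ∑ z ∈ s, W z * (q z n : ℝ≥0∞)
      = ∑ z ∈ s, W z * rationalMeasure (w n) {z} := Finset.sum_congr rfl fun z hz => by
        rw [rationalMeasure_singleton, Finsupp.indicator_of_mem hz]
    _ ≤ ∑' z, W z * rationalMeasure (w n) {z} := ENNReal.sum_le_tsum s
    _ = ∫⁻ z, W z ∂rationalMeasure (w n) := (lintegral_countable' _).symm
    _ ≤ _ := le_iSup₂_of_le (w n) (hw_le n) le_rfl

end RationalMeasure

section NearCoupling

variable {X Y V : Type*} [MeasurableSpace X] [MeasurableSpace Y] [MeasurableSpace V]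

/-- `π` couples a part of `μ` with a part of `ν`, and the uncoupled remainders have total weight at
most `η`, where mass at `x : X` is weighted by `f x` and mass at `y : Y` by `f' y`. -/
structure IsNearCoupling (f : X → ℝ≥0∞) (f' : Y → ℝ≥0∞) (η : ℝ≥0∞) (π : Measure (X × Y))
    (μ : Measure X) (ν : Measure Y) : Prop where
  fst_le : π.fst ≤ μ
  snd_le : π.snd ≤ ν
  lintegral_le : ∫⁻ x, f x ∂μ + ∫⁻ y, f' y ∂ν ≤ ∫⁻ z, (f z.1 + f' z.2) ∂π + η

namespace IsNearCoupling

variable {f : X → ℝ≥0∞} {f' : Y → ℝ≥0∞} {η : ℝ≥0∞}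

lemma transportCost_le {π : Measure (X × Y)} {μ : Measure X} {ν : Measure Y} [IsFiniteMeasure μ]
    [IsFiniteMeasure ν] (h : IsNearCoupling f f' η π μ ν) (hf : Measurable f) (hf' : Measurable f')
    {c : X × Y → ℝ≥0∞} (hc : ∀ z, c z ≤ f z.1 + f' z.2) (hmass : μ Set.univ = ν Set.univ)
    (hfμ : ∫⁻ x, f x ∂μ ≠ ∞) (hfν : ∫⁻ y, f' y ∂ν ≠ ∞) :
    transportCost c μ ν ≤ ∫⁻ z, c z ∂π + η := by
  have hπ : IsFiniteMeasure π.fst := isFiniteMeasure_of_le μ h.fst_le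
  have hπ' : IsFiniteMeasure π.snd := isFiniteMeasure_of_le ν h.snd_le
  set ρ := μ - π.fst
  set ρ' := ν - π.snd
  have hρ : ρ + π.fst = μ := Measure.sub_add_cancel_of_le h.fst_le
  have hρ' : ρ' + π.snd = ν := Measure.sub_add_cancel_of_le h.snd_le
  have hρmass : ρ Set.univ = ρ' Set.univ := by
    rw [Measure.sub_apply .univ h.fst_le, Measure.sub_apply .univ h.snd_le, hmass,
      Measure.fst_univ, Measure.snd_univ]
  have hfin : ∫⁻ z, (f z.1 + f' z.2) ∂π ≠ ∞ := by
    rw [lintegral_add_fst_snd hf hf']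
    exact ENNReal.add_ne_top.2 ⟨ne_top_of_le_ne_top hfμ (lintegral_mono' h.fst_le le_rfl),
      ne_top_of_le_ne_top hfν (lintegral_mono' h.snd_le le_rfl)⟩
  have hρη : ∫⁻ x, f x ∂ρ + ∫⁻ y, f' y ∂ρ' ≤ η := by
    refine (ENNReal.add_le_add_iff_left hfin).1 (le_trans (le_of_eq ?_) h.lintegral_le)
    rw [lintegral_add_fst_snd hf hf', ← hρ, ← hρ', lintegral_add_measure, lintegral_add_measure]
    ring
  calc transportCost c μ ν
      ≤ transportCost c ρ ρ' + transportCost c π.fst π.snd :=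
        hρ ▸ hρ' ▸ transportCost_add_le c ρ π.fst ρ' π.snd
    _ ≤ η + ∫⁻ z, c z ∂π := add_le_add
        ((transportCost_le_lintegral_add hf hf' hc hρmass).trans hρη)
        (transportCost_le_lintegral c π)
    _ = ∫⁻ z, c z ∂π + η := add_comm _ _

lemma comp {κ : Kernel V (X × Y)} {a : Kernel V X} {b : Kernel V Y} {m : Measure V}
    (h : ∀ᵐ v ∂m, IsNearCoupling f f' η (κ v) (a v) (b v)) (hf : Measurable f)
    (hf' : Measurable f') :
    IsNearCoupling f f' (η * m Set.univ) (κ ∘ₘ m) (a ∘ₘ m) (b ∘ₘ m) where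
  fst_le := by
    refine Measure.le_iff.2 fun s hs => ?_
    rw [Measure.fst_apply hs, Measure.bind_apply (measurable_fst hs) κ.aemeasurable,
      Measure.bind_apply hs a.aemeasurable]
    refine lintegral_mono_ae (h.mono fun v hv => ?_)
    rw [← Measure.fst_apply hs]
    exact hv.fst_le s
  snd_le := by
    refine Measure.le_iff.2 fun s hs => ?_
    rw [Measure.snd_apply hs, Measure.bind_apply (measurable_snd hs) κ.aemeasurable,
      Measure.bind_apply hs b.aemeasurable]
    refine lintegral_mono_ae (h.mono fun v hv => ?_)
    rw [← Measure.snd_apply hs]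
    exact hv.snd_le s
  lintegral_le := by
    rw [Measure.lintegral_bind a.aemeasurable hf.aemeasurable,
      Measure.lintegral_bind b.aemeasurable hf'.aemeasurable,
      Measure.lintegral_bind κ.aemeasurable (by fun_prop), ← lintegral_const,
      ← lintegral_add_left hf.lintegral_kernel, ← lintegral_add_right _ measurable_const]
    exact lintegral_mono_ae (h.mono fun v hv => hv.lintegral_le)

variable [Countable X] [Countable Y] [MeasurableSingletonClass X] [MeasurableSingletonClass Y]

lemma exists_rationalMeasure {c : X × Y → ℝ≥0∞} {μ : Measure X} {ν : Measure Y}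
    (hf : ∀ x, f x ≠ ∞) (hf' : ∀ y, f' y ≠ ∞) (hfμ : ∫⁻ x, f x ∂μ ≠ ∞) (hfν : ∫⁻ y, f' y ∂ν ≠ ∞)
    (hη : η ≠ 0) {r : ℝ≥0∞} (hr : transportCost c μ ν < r) :
    ∃ w, IsNearCoupling f f' η (rationalMeasure w) μ ν ∧ ∫⁻ z, c z ∂rationalMeasure w < r := by
  obtain ⟨p, rfl, rfl, hp⟩ := exists_lintegral_lt_of_transportCost_lt hr
  have hW := lintegral_le_iSup_rationalMeasure p (W := fun z => f z.1 + f' z.2)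
    fun z => ENNReal.add_ne_top.2 ⟨hf z.1, hf' z.2⟩
  have hsum := lintegral_add_fst_snd (measurable_of_countable f) (measurable_of_countable f') p
  have hlt := (ENNReal.lt_add_right (hsum ▸ ENNReal.add_ne_top.2 ⟨hfμ, hfν⟩) hη).trans_le
    (add_le_add_left hW η)
  have hzero : ∃ w : X × Y →₀ ℚ≥0, rationalMeasure w ≤ p :=
    ⟨0, rationalMeasure_zero.trans_le (Measure.zero_le p)⟩
  rw [ENNReal.biSup_add' hzero] at hlt
  simp only [lt_iSup_iff] at hlt
  obtain ⟨w, hwp, hw⟩ := hlt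
  exact ⟨w, ⟨Measure.fst_mono hwp, Measure.snd_mono hwp, hsum ▸ hw.le⟩,
    (lintegral_mono' hwp le_rfl).trans_lt hp⟩

lemma measurableSet_setOf (a : Kernel V X) (b : Kernel V Y) (π : Measure (X × Y)) :
    MeasurableSet {v | IsNearCoupling f f' η π (a v) (b v)} := by
  have hset : {v | IsNearCoupling f f' η π (a v) (b v)} =
      {v | ∀ x, π.fst {x} ≤ a v {x}} ∩ {v | ∀ y, π.snd {y} ≤ b v {y}} ∩
      {v | ∫⁻ x, f x ∂a v + ∫⁻ y, f' y ∂b v ≤ ∫⁻ z, (f z.1 + f' z.2) ∂π + η} := by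
    ext v
    exact ⟨fun h => ⟨⟨fun x => h.fst_le _, fun y => h.snd_le _⟩, h.lintegral_le⟩,
      fun h => ⟨measure_le_of_singleton_le h.1.1, measure_le_of_singleton_le h.1.2, h.2⟩⟩
  rw [hset, Set.ofPred_forall, Set.ofPred_forall]
  refine ((MeasurableSet.iInter fun x => ?_).inter (.iInter fun y => ?_)).inter ?_
  · exact measurableSet_le measurable_const (a.measurable_coe (measurableSet_singleton x))
  · exact measurableSet_le measurable_const (b.measurable_coe (measurableSet_singleton y))
  · exact measurableSet_le ((measurable_of_countable f).lintegral_kernel.add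
      (measurable_of_countable f').lintegral_kernel) measurable_const

end IsNearCoupling

end NearCoupling

section CountableConvexity

variable {V : Type*} [MeasurableSpace V] {m : Measure V}

lemma exists_measurable_selection {ι : Type*} [Countable ι] [Nonempty ι] [MeasurableSpace ι]
    {P : ι → V → Prop} (hP : ∀ i, MeasurableSet {v | P i v}) (h : ∀ᵐ v ∂m, ∃ i, P i v) :
    ∃ s : V → ι, Measurable s ∧ ∀ᵐ v ∂m, P (s v) v := by
  classical
  obtain ⟨e, he⟩ := exists_surjective_nat ι
  have hex (v : V) : ∃ n, P (e n) v ∨ ∀ i, ¬ P i v := by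
    by_cases hv : ∃ i, P i v
    · obtain ⟨i, hi⟩ := hv
      obtain ⟨n, rfl⟩ := he i
      exact ⟨n, .inl hi⟩
    · exact ⟨0, .inr (not_exists.1 hv)⟩
  have hmeas (n : ℕ) : MeasurableSet {v | P (e n) v ∨ ∀ i, ¬ P i v} := by
    rw [Set.ofPred_or, Set.ofPred_forall]
    exact (hP (e n)).union (.iInter fun i => (hP i).compl)
  refine ⟨fun v => e (Nat.find (hex v)),
    (measurable_of_countable e).comp (measurable_find hex hmeas),
    h.mono fun v ⟨i, hi⟩ => (Nat.find_spec (hex v)).resolve_right fun hv => hv i hi⟩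

variable {X Y : Type*} [MeasurableSpace X] [MeasurableSpace Y] [Countable X] [Countable Y]
  [MeasurableSingletonClass X] [MeasurableSingletonClass Y]

lemma exists_kernel_isNearCoupling {c : X × Y → ℝ≥0∞} {f : X → ℝ≥0∞} {f' : Y → ℝ≥0∞}
    (hf : ∀ x, f x ≠ ∞) (hf' : ∀ y, f' y ≠ ∞) {a : Kernel V X} {b : Kernel V Y}
    (hfa : ∀ᵐ v ∂m, ∫⁻ x, f x ∂a v ≠ ∞) (hfb : ∀ᵐ v ∂m, ∫⁻ y, f' y ∂b v ≠ ∞) {r : V → ℝ≥0∞}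
    (hr : Measurable r) (hlt : ∀ᵐ v ∂m, transportCost c (a v) (b v) < r v) {η : ℝ≥0∞}
    (hη : η ≠ 0) :
    ∃ κ : Kernel V (X × Y),
      ∀ᵐ v ∂m, IsNearCoupling f f' η (κ v) (a v) (b v) ∧ ∫⁻ z, c z ∂κ v < r v := by
  let _ : MeasurableSpace (X × Y →₀ ℚ≥0) := ⊤
  have hmeas (w : X × Y →₀ ℚ≥0) : MeasurableSet {v | IsNearCoupling f f' η (rationalMeasure w)
      (a v) (b v) ∧ ∫⁻ z, c z ∂rationalMeasure w < r v} :=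
    (IsNearCoupling.measurableSet_setOf a b _).inter (measurableSet_lt measurable_const hr)
  have hex : ∀ᵐ v ∂m, ∃ w, IsNearCoupling f f' η (rationalMeasure w) (a v) (b v) ∧
      ∫⁻ z, c z ∂rationalMeasure w < r v := by
    filter_upwards [hfa, hfb, hlt] with v hav hbv hv
    exact IsNearCoupling.exists_rationalMeasure hf hf' hav hbv hη hv
  obtain ⟨w, hw, hnear⟩ := exists_measurable_selection hmeas hex
  exact ⟨⟨fun v => rationalMeasure (w v), (measurable_of_countable rationalMeasure).comp hw⟩, hnear⟩

theorem transportCost_comp_le_lintegral_of_countable {c : X × Y → ℝ≥0∞} {f : X → ℝ≥0∞}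
    {f' : Y → ℝ≥0∞} (hc : ∀ z, c z ≤ f z.1 + f' z.2) (hf : ∀ x, f x ≠ ∞) (hf' : ∀ y, f' y ≠ ∞)
    {a : Kernel V X} {b : Kernel V Y} [IsMarkovKernel a] [IsMarkovKernel b] [IsFiniteMeasure m]
    (hfa : ∫⁻ x, f x ∂(a ∘ₘ m) ≠ ∞) (hfb : ∫⁻ y, f' y ∂(b ∘ₘ m) ≠ ∞) {g : V → ℝ≥0∞}
    (hg : Measurable g) (hle : ∀ᵐ v ∂m, transportCost c (a v) (b v) ≤ g v) :
    transportCost c (a ∘ₘ m) (b ∘ₘ m) ≤ ∫⁻ v, g v ∂m := by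
  obtain hgtop | hgfin := eq_or_ne (∫⁻ v, g v ∂m) ∞
  · exact hgtop ▸ le_top
  have hfm : Measurable f := measurable_of_countable f
  have hfm' : Measurable f' := measurable_of_countable f'
  have hfa_ae : ∀ᵐ v ∂m, ∫⁻ x, f x ∂a v ≠ ∞ := by
    rw [Measure.lintegral_bind a.aemeasurable hfm.aemeasurable] at hfa
    exact (ae_lt_top hfm.lintegral_kernel hfa).mono fun _ => LT.lt.ne
  have hfb_ae : ∀ᵐ v ∂m, ∫⁻ y, f' y ∂b v ≠ ∞ := by
    rw [Measure.lintegral_bind b.aemeasurable hfm'.aemeasurable] at hfb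
    exact (ae_lt_top hfm'.lintegral_kernel hfb).mono fun _ => LT.lt.ne
  refine le_of_forall_pos_le_add_mul (C := 2 * m Set.univ) (by finiteness) fun η hη => ?_
  have hη0 : (η : ℝ≥0∞) ≠ 0 := (ENNReal.coe_pos.2 hη).ne'
  have hlt : ∀ᵐ v ∂m, transportCost c (a v) (b v) < g v + η := by
    filter_upwards [hle, ae_lt_top hg hgfin] with v hv hgv
    exact hv.trans_lt (ENNReal.lt_add_right hgv.ne hη0)
  obtain ⟨κ, hκ⟩ := exists_kernel_isNearCoupling hf hf' hfa_ae hfb_ae (hg.add_const _) hlt hη0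
  have hnear := IsNearCoupling.comp (hκ.mono fun _ hv => hv.1) hfm hfm'
  calc transportCost c (a ∘ₘ m) (b ∘ₘ m)
      ≤ ∫⁻ z, c z ∂(κ ∘ₘ m) + η * m Set.univ :=
        hnear.transportCost_le hfm hfm' hc (by simp) hfa hfb
    _ = ∫⁻ v, ∫⁻ z, c z ∂κ v ∂m + η * m Set.univ := by
        rw [Measure.lintegral_bind κ.aemeasurable (measurable_of_countable c).aemeasurable]
    _ ≤ ∫⁻ v, (g v + η) ∂m + η * m Set.univ := by
        gcongr ?_ + _
        exact lintegral_mono_ae (hκ.mono fun v hv => hv.2.le)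
    _ = ∫⁻ v, g v ∂m + η * (2 * m Set.univ) := by
        rw [lintegral_add_right _ measurable_const, lintegral_const]
        ring

end CountableConvexity

section WassersteinCost

lemma lintegral_add_const_rpow_le {α : Type*} [MeasurableSpace α] {m : Measure α} {f : α → ℝ≥0∞}
    (hf : AEMeasurable f m) {p : ℝ} (hp : 1 ≤ p) (δ : ℝ≥0∞) :
    (∫⁻ x, (f x + δ) ^ p ∂m) ^ p⁻¹ ≤ (∫⁻ x, f x ^ p ∂m) ^ p⁻¹ + δ * m Set.univ ^ p⁻¹ := by
  have hp0 : p ≠ 0 := (zero_lt_one.trans_le hp).ne'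
  have h := ENNReal.lintegral_Lp_add_le hf (aemeasurable_const (b := δ)) hp
  rwa [lintegral_const, one_div, ENNReal.mul_rpow_of_nonneg _ _ (by positivity),
    ENNReal.rpow_rpow_inv hp0] at h

lemma transportCost_rpow_le_add {X Y : Type*} [MeasurableSpace X] [MeasurableSpace Y]
    {c c' : X × Y → ℝ≥0∞} (hc' : Measurable c') {δ : ℝ≥0∞} (h : ∀ z, c z ≤ c' z + δ) {p : ℝ}
    (hp : 1 ≤ p) (μ : Measure X) (ν : Measure Y) :
    transportCost (fun z => c z ^ p) μ ν ^ p⁻¹ ≤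
      transportCost (fun z => c' z ^ p) μ ν ^ p⁻¹ + δ * μ Set.univ ^ p⁻¹ := by
  have hp0 : 0 < p := zero_lt_one.trans_le hp
  rw [← tsub_le_iff_right, ENNReal.le_rpow_inv_iff hp0]
  refine le_iInf fun π => le_iInf₂ fun hμ hν => ?_
  rw [← ENNReal.le_rpow_inv_iff hp0, tsub_le_iff_right, ← hμ, ← hν]
  calc transportCost (fun z => c z ^ p) π.fst π.snd ^ p⁻¹
      ≤ (∫⁻ z, (c' z + δ) ^ p ∂π) ^ p⁻¹ := by
        gcongr
        exact (transportCost_le_lintegral _ π).trans (lintegral_mono fun z => by gcongr; exact h z)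
    _ ≤ (∫⁻ z, c' z ^ p ∂π) ^ p⁻¹ + δ * π.fst Set.univ ^ p⁻¹ := by
        rw [Measure.fst_univ]
        exact lintegral_add_const_rpow_le hc'.aemeasurable hp δ

variable {X : Type*} [PseudoMetricSpace X]

lemma edist_rpow_le_add {p : ℝ} (hp : 1 ≤ p) (o x y : X) :
    edist x y ^ p ≤ 2 ^ (p - 1) * edist x o ^ p + 2 ^ (p - 1) * edist y o ^ p := by
  rw [← mul_add]
  exact (ENNReal.rpow_le_rpow (edist_triangle_right x y o) (by positivity)).trans
    (ENNReal.rpow_add_le_mul_rpow_add_rpow _ _ hp)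

variable [MeasurableSpace X]

/-- The `p`-th power `W_p(μ, ν) ^ p` of the `p`-Wasserstein distance. -/
def wassersteinCost (p : ℝ) (μ ν : Measure X) : ℝ≥0∞ :=
  transportCost (fun z => edist z.1 z.2 ^ p) μ ν

lemma exists_measurable_nat_edist_le [OpensMeasurableSpace X] [TopologicalSpace.SeparableSpace X]
    [Nonempty X] {ε : ℝ≥0∞} (hε : ε ≠ 0) :
    ∃ (T : X → ℕ) (x : ℕ → X), Measurable T ∧ ∀ y, edist y (x (T y)) ≤ ε := by
  classical
  have hex (y : X) : ∃ n, edist y (TopologicalSpace.denseSeq X n) ≤ ε :=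
    ((TopologicalSpace.denseRange_denseSeq X).exists_mem_open Metric.isOpen_eball
      ⟨y, Metric.mem_eball_self (pos_iff_ne_zero.2 hε)⟩).imp fun n hn => (edist_comm _ _).trans_le
        (le_of_lt hn)
  exact ⟨fun y => Nat.find (hex y), TopologicalSpace.denseSeq X,
    measurable_find hex fun n => measurableSet_le (by fun_prop) measurable_const,
    fun y => Nat.find_spec (hex y)⟩

variable {T : X → ℕ} {x : ℕ → X} {ε : ℝ≥0∞} {p : ℝ}

lemma lintegral_edist_rpow_map_ne_top (hT : Measurable T) (hε : ε ≠ ∞)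
    (hx : ∀ y, edist y (x (T y)) ≤ ε) (hp : 1 ≤ p) {o : X} {μ : Measure X} [IsFiniteMeasure μ]
    (hμ : ∫⁻ y, edist y o ^ p ∂μ ≠ ∞) :
    ∫⁻ i, edist (x i) o ^ p ∂μ.map T ≠ ∞ := by
  rw [lintegral_map (measurable_of_countable _) hT]
  refine ne_top_of_le_ne_top (b := 2 ^ (p - 1) * (ε ^ p * μ Set.univ + ∫⁻ y, edist y o ^ p ∂μ))
    (by finiteness) ?_
  calc ∫⁻ y, edist (x (T y)) o ^ p ∂μ
      ≤ ∫⁻ y, 2 ^ (p - 1) * (ε ^ p + edist y o ^ p) ∂μ := lintegral_mono fun y => by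
        have h : edist (x (T y)) o ≤ ε + edist y o :=
          (edist_triangle_left _ _ y).trans (by gcongr; exact hx y)
        exact (ENNReal.rpow_le_rpow h (by positivity)).trans
          (ENNReal.rpow_add_le_mul_rpow_add_rpow _ _ hp)
    _ = 2 ^ (p - 1) * (ε ^ p * μ Set.univ + ∫⁻ y, edist y o ^ p ∂μ) := by
        rw [lintegral_const_mul' _ _ (by finiteness), lintegral_add_left measurable_const,
          lintegral_const]

lemma wassersteinCost_rpow_le_map_add (hT : Measurable T) (hx : ∀ y, edist y (x (T y)) ≤ ε)
    (hp : 1 ≤ p) (μ ν : Measure X) [IsFiniteMeasure μ] [IsFiniteMeasure ν] :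
    wassersteinCost p μ ν ^ p⁻¹ ≤
      transportCost (fun z => edist (x z.1) (x z.2) ^ p) (μ.map T) (ν.map T) ^ p⁻¹ +
        2 * ε * μ Set.univ ^ p⁻¹ := by
  have hd (z : X × X) : edist z.1 z.2 ≤ edist (x (T z.1)) (x (T z.2)) + 2 * ε := by
    calc edist z.1 z.2
        ≤ edist z.1 (x (T z.1)) + edist (x (T z.1)) (x (T z.2)) + edist (x (T z.2)) z.2 :=
          edist_triangle4 _ _ _ _
      _ ≤ ε + edist (x (T z.1)) (x (T z.2)) + ε := by
          gcongr
          exacts [hx _, (edist_comm _ _).trans_le (hx _)]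
      _ = edist (x (T z.1)) (x (T z.2)) + 2 * ε := by ring
  have hmeas : Measurable fun z : X × X => edist (x (T z.1)) (x (T z.2)) :=
    (measurable_of_countable fun z : ℕ × ℕ => edist (x z.1) (x z.2)).comp (hT.prodMap hT)
  refine (transportCost_rpow_le_add hmeas hd hp μ ν).trans ?_
  gcongr
  exact transportCost_comp_prodMap_le hT hT (fun z => edist (x z.1) (x z.2) ^ p) μ ν

variable [OpensMeasurableSpace X] [SecondCountableTopology X]

lemma transportCost_map_rpow_le_add (hT : Measurable T) (hx : ∀ y, edist y (x (T y)) ≤ ε)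
    (hp : 1 ≤ p) (μ ν : Measure X) :
    transportCost (fun z => edist (x z.1) (x z.2) ^ p) (μ.map T) (ν.map T) ^ p⁻¹ ≤
      wassersteinCost p μ ν ^ p⁻¹ + 2 * ε * μ Set.univ ^ p⁻¹ := by
  have hd (z : X × X) : edist (x (T z.1)) (x (T z.2)) ≤ edist z.1 z.2 + 2 * ε := by
    calc edist (x (T z.1)) (x (T z.2))
        ≤ edist (x (T z.1)) z.1 + edist z.1 z.2 + edist z.2 (x (T z.2)) :=
          edist_triangle4 _ _ _ _
      _ ≤ ε + edist z.1 z.2 + ε := by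
          gcongr
          exacts [(edist_comm _ _).trans_le (hx _), hx _]
      _ = edist z.1 z.2 + 2 * ε := by ring
  refine le_trans ?_ (transportCost_rpow_le_add (by fun_prop) hd hp μ ν)
  gcongr
  exact transportCost_map_le hT hT _ μ ν

theorem wassersteinCost_comp_le_lintegral {V : Type*} [MeasurableSpace V] {m : Measure V}
    [IsFiniteMeasure m] {κ κ' : Kernel V X} [IsMarkovKernel κ] [IsMarkovKernel κ'] (hp : 1 ≤ p)
    {o : X} (hκ : ∫⁻ y, edist y o ^ p ∂(κ ∘ₘ m) ≠ ∞) (hκ' : ∫⁻ y, edist y o ^ p ∂(κ' ∘ₘ m) ≠ ∞)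
    {g : V → ℝ≥0∞} (hg : Measurable g) (hle : ∀ᵐ v ∂m, wassersteinCost p (κ v) (κ' v) ≤ g v) :
    wassersteinCost p (κ ∘ₘ m) (κ' ∘ₘ m) ≤ ∫⁻ v, g v ∂m := by
  have hp0 : 0 < p := zero_lt_one.trans_le hp
  rw [← ENNReal.rpow_le_rpow_iff (inv_pos.2 hp0)]
  refine le_of_forall_pos_le_add_mul (C := 4 * m Set.univ ^ p⁻¹) (by finiteness) fun ε hε => ?_
  have : Nonempty X := ⟨o⟩
  obtain ⟨T, x, hT, hx⟩ := exists_measurable_nat_edist_le (X := X) (ENNReal.coe_pos.2 hε).ne'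
  have hmoment {θ : Kernel V X} [IsMarkovKernel θ] (hθ : ∫⁻ y, edist y o ^ p ∂(θ ∘ₘ m) ≠ ∞) :
      ∫⁻ i, 2 ^ (p - 1) * edist (x i) o ^ p ∂(θ.map T ∘ₘ m) ≠ ∞ := by
    rw [lintegral_const_mul' _ _ (by finiteness), ← Measure.map_comp _ _ hT]
    exact ENNReal.mul_ne_top (by finiteness)
      (lintegral_edist_rpow_map_ne_top hT ENNReal.coe_ne_top hx hp hθ)
  have hcell (v : V) (hv : wassersteinCost p (κ v) (κ' v) ≤ g v) :
      transportCost (fun z => edist (x z.1) (x z.2) ^ p) (κ.map T v) (κ'.map T v) ≤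
        (g v ^ p⁻¹ + 2 * ε) ^ p := by
    rw [← ENNReal.rpow_inv_le_iff hp0, Kernel.map_apply _ hT, Kernel.map_apply _ hT]
    refine (transportCost_map_rpow_le_add hT hx hp _ _).trans ?_
    rw [measure_univ, ENNReal.one_rpow, mul_one]
    gcongr
  have := Kernel.IsMarkovKernel.map κ hT
  have := Kernel.IsMarkovKernel.map κ' hT
  calc wassersteinCost p (κ ∘ₘ m) (κ' ∘ₘ m) ^ p⁻¹
      ≤ transportCost (fun z => edist (x z.1) (x z.2) ^ p) (κ.map T ∘ₘ m) (κ'.map T ∘ₘ m) ^ p⁻¹ +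
          2 * ε * m Set.univ ^ p⁻¹ := by
        simpa only [Measure.map_comp _ _ hT, Measure.comp_apply_univ] using
          wassersteinCost_rpow_le_map_add hT hx hp (κ ∘ₘ m) (κ' ∘ₘ m)
    _ ≤ (∫⁻ v, (g v ^ p⁻¹ + 2 * ε) ^ p ∂m) ^ p⁻¹ + 2 * ε * m Set.univ ^ p⁻¹ := by
        gcongr
        exact transportCost_comp_le_lintegral_of_countable
          (fun z => edist_rpow_le_add hp o (x z.1) (x z.2)) (fun i => by finiteness)
          (fun i => by finiteness) (hmoment hκ) (hmoment hκ') (by fun_prop) (hle.mono hcell)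
    _ ≤ (∫⁻ v, (g v ^ p⁻¹) ^ p ∂m) ^ p⁻¹ + 2 * ε * m Set.univ ^ p⁻¹ +
          2 * ε * m Set.univ ^ p⁻¹ := by
        gcongr
        exact lintegral_add_const_rpow_le (by fun_prop) hp _
    _ = (∫⁻ v, g v ∂m) ^ p⁻¹ + ε * (4 * m Set.univ ^ p⁻¹) := by
        simp only [ENNReal.rpow_inv_rpow hp0.ne']
        ring

end WassersteinCost

section Mixture

variable {X V : Type*} [MeasurableSpace X] [MeasurableSpace V] {m : Measure V} {κ κ' : Kernel V X}

lemma lintegral_comp_withDensity_le {w : V → ℝ≥0∞} (hw : Measurable w) {φ : X → ℝ≥0∞}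
    (hφ : Measurable φ) {k : ℝ≥0∞} (hκ : ∀ᵐ v ∂m, ∫⁻ x, φ x ∂κ v ≤ k) :
    ∫⁻ x, φ x ∂(κ ∘ₘ m.withDensity w) ≤ k * ∫⁻ v, w v ∂m := by
  rw [Measure.lintegral_bind κ.aemeasurable hφ.aemeasurable,
    lintegral_withDensity_eq_lintegral_mul _ hw hφ.lintegral_kernel, ← lintegral_const_mul _ hw]
  refine lintegral_mono_ae (hκ.mono fun v hv => ?_)
  rw [Pi.mul_apply, mul_comm]
  gcongr

lemma comp_withDensity_univ [IsMarkovKernel κ] (w : V → ℝ≥0∞) :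
    (κ ∘ₘ m.withDensity w) Set.univ = ∫⁻ v, w v ∂m := by
  rw [Measure.comp_apply_univ, withDensity_apply _ .univ, setLIntegral_univ]

lemma comp_withDensity_eq_min_add_tsub (κ : Kernel V X) {f g : V → ℝ≥0∞} (hf : Measurable f)
    (hg : Measurable g) :
    κ ∘ₘ m.withDensity f =
      κ ∘ₘ m.withDensity (fun v => min (f v) (g v)) + κ ∘ₘ m.withDensity (fun v => f v - g v) := by
  rw [← Measure.comp_add, ← withDensity_add_left (hf.min hg)]
  congr 2
  ext v
  rw [Pi.add_apply, add_comm, tsub_add_min]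

variable [PseudoMetricSpace X] [OpensMeasurableSpace X] {p : ℝ} {o : X}

lemma wassersteinCost_le_of_mass_eq (hp : 1 ≤ p) (o : X) {μ ν : Measure X} [IsFiniteMeasure μ]
    [IsFiniteMeasure ν] (hmass : μ Set.univ = ν Set.univ) :
    wassersteinCost p μ ν ≤
      2 ^ (p - 1) * (∫⁻ y, edist y o ^ p ∂μ + ∫⁻ y, edist y o ^ p ∂ν) := by
  have hmeas : Measurable fun y => 2 ^ (p - 1) * edist y o ^ p := by fun_prop
  refine (transportCost_le_lintegral_add hmeas hmeas
    (fun z => edist_rpow_le_add hp o z.1 z.2) hmass).trans_eq ?_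
  rw [lintegral_const_mul' _ _ (by finiteness), lintegral_const_mul' _ _ (by finiteness), mul_add]

variable [IsMarkovKernel κ] [IsMarkovKernel κ'] {k : ℝ≥0∞} {f g h : V → ℝ≥0∞}

lemma wassersteinCost_comp_withDensity_le_moment (hp : 1 ≤ p)
    (hκ : ∀ᵐ v ∂m, ∫⁻ y, edist y o ^ p ∂κ v ≤ k) (hκ' : ∀ᵐ v ∂m, ∫⁻ y, edist y o ^ p ∂κ' v ≤ k)
    (hf : Measurable f) (hg : Measurable g) (hfg : ∫⁻ v, f v ∂m = ∫⁻ v, g v ∂m)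
    (hfin : ∫⁻ v, f v ∂m ≠ ∞) :
    wassersteinCost p (κ ∘ₘ m.withDensity f) (κ' ∘ₘ m.withDensity g) ≤
      2 ^ p * k * ∫⁻ v, f v ∂m := by
  have := isFiniteMeasure_withDensity hfin
  have := isFiniteMeasure_withDensity (hfg ▸ hfin)
  have hmass : (κ ∘ₘ m.withDensity f) Set.univ = (κ' ∘ₘ m.withDensity g) Set.univ := by
    rw [comp_withDensity_univ, comp_withDensity_univ, hfg]
  have two_rpow : (2 : ℝ≥0∞) ^ p = 2 ^ (p - 1) * 2 := by
    simpa only [sub_add_cancel, ENNReal.rpow_one] using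
      ENNReal.rpow_add (p - 1) 1 two_ne_zero ENNReal.ofNat_ne_top
  calc wassersteinCost p (κ ∘ₘ m.withDensity f) (κ' ∘ₘ m.withDensity g)
      ≤ 2 ^ (p - 1) * (∫⁻ y, edist y o ^ p ∂(κ ∘ₘ m.withDensity f) +
          ∫⁻ y, edist y o ^ p ∂(κ' ∘ₘ m.withDensity g)) := wassersteinCost_le_of_mass_eq hp o hmass
    _ ≤ 2 ^ (p - 1) * (k * ∫⁻ v, f v ∂m + k * ∫⁻ v, g v ∂m) := by
        gcongr
        exacts [lintegral_comp_withDensity_le hf (by fun_prop) hκ,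
          lintegral_comp_withDensity_le hg (by fun_prop) hκ']
    _ = 2 ^ p * k * ∫⁻ v, f v ∂m := by
        rw [← hfg, two_rpow]
        ring

variable [SecondCountableTopology X]

lemma wassersteinCost_comp_withDensity_le_of_le (hp : 1 ≤ p) (hk : k ≠ ∞)
    (hκ : ∀ᵐ v ∂m, ∫⁻ y, edist y o ^ p ∂κ v ≤ k) (hκ' : ∀ᵐ v ∂m, ∫⁻ y, edist y o ^ p ∂κ' v ≤ k)
    (hf : Measurable f) (hfin : ∫⁻ v, f v ∂m ≠ ∞) {R : ℝ≥0∞} (hfR : ∀ᵐ v ∂m, f v ≤ R)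
    (hh : Measurable h) (hle : ∀ᵐ v ∂m, wassersteinCost p (κ v) (κ' v) ≤ h v) :
    wassersteinCost p (κ ∘ₘ m.withDensity f) (κ' ∘ₘ m.withDensity f) ≤ R * ∫⁻ v, h v ∂m := by
  have := isFiniteMeasure_withDensity hfin
  have moment_ne_top {θ : Kernel V X} (hθ : ∀ᵐ v ∂m, ∫⁻ y, edist y o ^ p ∂θ v ≤ k) :
      ∫⁻ y, edist y o ^ p ∂(θ ∘ₘ m.withDensity f) ≠ ∞ :=
    ne_top_of_le_ne_top (ENNReal.mul_ne_top hk hfin)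
      (lintegral_comp_withDensity_le hf (by fun_prop) hθ)
  calc wassersteinCost p (κ ∘ₘ m.withDensity f) (κ' ∘ₘ m.withDensity f)
      ≤ ∫⁻ v, h v ∂m.withDensity f :=
        wassersteinCost_comp_le_lintegral hp (moment_ne_top hκ) (moment_ne_top hκ') hh
          ((withDensity_absolutelyContinuous m f).ae_le hle)
    _ = ∫⁻ v, f v * h v ∂m := lintegral_withDensity_eq_lintegral_mul _ hf hh
    _ ≤ ∫⁻ v, R * h v ∂m := lintegral_mono_ae (hfR.mono fun v hv => by gcongr)
    _ = R * ∫⁻ v, h v ∂m := lintegral_const_mul _ hh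

theorem wassersteinCost_comp_withDensity_le (hp : 1 ≤ p) (hk : k ≠ ∞)
    (hκ : ∀ᵐ v ∂m, ∫⁻ y, edist y o ^ p ∂κ v ≤ k) (hκ' : ∀ᵐ v ∂m, ∫⁻ y, edist y o ^ p ∂κ' v ≤ k)
    (hf : Measurable f) (hg : Measurable g) (hfg : ∫⁻ v, f v ∂m = ∫⁻ v, g v ∂m)
    (hfin : ∫⁻ v, f v ∂m ≠ ∞) {R : ℝ≥0∞} (hfR : ∀ᵐ v ∂m, f v ≤ R) (hh : Measurable h)
    (hle : ∀ᵐ v ∂m, wassersteinCost p (κ v) (κ' v) ≤ h v) :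
    wassersteinCost p (κ ∘ₘ m.withDensity f) (κ' ∘ₘ m.withDensity g) ≤
      R * ∫⁻ v, h v ∂m + 2 ^ p * k * ∫⁻ v, (f v - g v) ∂m := by
  rw [comp_withDensity_eq_min_add_tsub κ hf hg, comp_withDensity_eq_min_add_tsub κ' hg hf]
  simp only [min_comm (g _)]
  refine (transportCost_add_le _ _ _ _ _).trans (add_le_add ?_ ?_)
  · exact wassersteinCost_comp_withDensity_le_of_le hp hk hκ hκ' (hf.min hg)
      (ne_top_of_le_ne_top hfin (lintegral_mono fun v => min_le_left _ _))
      (hfR.mono fun v hv => (min_le_left _ _).trans hv) hh hle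
  · exact wassersteinCost_comp_withDensity_le_moment hp hκ hκ' (hf.sub hg) (hg.sub hf)
      (lintegral_tsub_comm hf.aemeasurable hg.aemeasurable hfg hfin)
      (ne_top_of_le_ne_top hfin (lintegral_mono fun v => tsub_le_self))

end Mixture

section MeasurableFamily

variable {V E : Type*} [MeasurableSpace V] [MeasurableSpace E]

lemma exists_countable_isPiSystem_generateFrom_eq [MeasurableSpace.CountablyGenerated E] :
    ∃ S : Set (Set E), S.Countable ∧ IsPiSystem S ∧
      ‹MeasurableSpace E› = MeasurableSpace.generateFrom S := by
  refine ⟨generateSetAlgebra (MeasurableSpace.countableGeneratingSet E),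
    countable_generateSetAlgebra MeasurableSpace.countable_countableGeneratingSet,
    fun a ha b hb _ => isSetAlgebra_generateSetAlgebra.inter_mem ha hb, ?_⟩
  rw [generateFrom_generateSetAlgebra_eq, MeasurableSpace.generateFrom_countableGeneratingSet]

lemma exists_isMarkovKernel_ae_eq [MeasurableSpace.CountablyGenerated E] [Nonempty E]
    {m : Measure V} {μ : V → Measure E} (hprob : ∀ᵐ v ∂m, IsProbabilityMeasure (μ v))
    (hmeas : ∀ B, MeasurableSet B → AEMeasurable (fun v => μ v B) m) :
    ∃ κ : Kernel V E, IsMarkovKernel κ ∧ ∀ᵐ v ∂m, κ v = μ v := by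
  classical
  obtain ⟨S, hS, hpi, hgen⟩ := exists_countable_isPiSystem_generateFrom_eq (E := E)
  have hSmeas (B : S) : MeasurableSet (B : Set E) :=
    hgen ▸ MeasurableSpace.measurableSet_generateFrom B.2
  have : Countable S := hS
  let good : Set V :=
    {v | IsProbabilityMeasure (μ v) ∧ ∀ B : S, μ v B = (hmeas B (hSmeas B)).mk _ v}
  have hgood : ∀ᵐ v ∂m, v ∈ good :=
    hprob.and (ae_all_iff.2 fun B => (hmeas B (hSmeas B)).ae_eq_mk)
  let N := toMeasurable m goodᶜ
  have mem_good {v : V} (hv : v ∉ N) : v ∈ good :=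
    not_not.1 fun h => hv (subset_toMeasurable m _ h)
  let κ : V → Measure E := N.piecewise (fun _ => Measure.dirac (Classical.arbitrary E)) μ
  have hκ (v : V) : IsProbabilityMeasure (κ v) := by
    by_cases hv : v ∈ N
    · simpa only [κ, N.piecewise_eq_of_mem _ _ hv] using Measure.dirac.isProbabilityMeasure
    · simpa only [κ, N.piecewise_eq_of_notMem _ _ hv] using (mem_good hv).1
  have hκ_meas : Measurable κ := by
    refine .measure_of_isPiSystem_of_isProbabilityMeasure hgen hpi fun B hB => ?_
    have hκB : (fun v => κ v B) = N.piecewise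
        (fun _ => Measure.dirac (Classical.arbitrary E) B) ((hmeas B (hSmeas ⟨B, hB⟩)).mk _) := by
      ext v
      by_cases hv : v ∈ N
      · simp only [κ, N.piecewise_eq_of_mem _ _ hv]
      · simpa only [κ, N.piecewise_eq_of_notMem _ _ hv] using (mem_good hv).2 ⟨B, hB⟩
    exact hκB ▸ measurable_const.piecewise (measurableSet_toMeasurable _ _)
      (AEMeasurable.measurable_mk _)
  have hκμ : ∀ᵐ v ∂m, κ v = μ v :=
    (measure_eq_zero_iff_ae_notMem.1 ((measure_toMeasurable _).trans hgood)).mono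
      fun v hv => N.piecewise_eq_of_notMem _ _ hv
  exact ⟨⟨κ, hκ_meas⟩, ⟨hκ⟩, hκμ⟩

end MeasurableFamily

section NormalizedDensity

variable {V : Type*} [MeasurableSpace V] {m : Measure V} {a b : V → ℝ} {c : ℝ}

lemma lintegral_ofReal_div_integral (ha : ∀ v, 0 ≤ a v) (h : 0 < ∫ v, a v ∂m) :
    ∫⁻ v, ENNReal.ofReal (a v / ∫ w, a w ∂m) ∂m = 1 := by
  have ha_int : Integrable a m := .of_integral_ne_zero h.ne'
  rw [← ofReal_integral_eq_lintegral_ofReal (ha_int.div_const _)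
    (.of_forall fun v => div_nonneg (ha v) h.le), integral_div, div_self h.ne', ENNReal.ofReal_one]

lemma lintegral_ofReal_div_tsub_le (hc : 0 < c) {s t : ℝ} (hs : c ≤ s) (ht : c ≤ t)
    (ha : Measurable a) (ha0 : ∀ v, 0 ≤ a v) (hb : Measurable b) (hb0 : ∀ v, 0 ≤ b v)
    (h : ∫⁻ v, ENNReal.ofReal (a v / s) ∂m = ∫⁻ v, ENNReal.ofReal (b v / t) ∂m)
    (hfin : ∫⁻ v, ENNReal.ofReal (a v / s) ∂m ≠ ∞) :
    ∫⁻ v, (ENNReal.ofReal (a v / s) - ENNReal.ofReal (b v / t)) ∂m ≤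
      ENNReal.ofReal c⁻¹ * ∫⁻ v, ENNReal.ofReal |a v - b v| ∂m := by
  wlog hts : t ≤ s generalizing a b s t
  · rw [lintegral_tsub_comm (by fun_prop) (by fun_prop) h hfin]
    simpa only [abs_sub_comm] using
      this ht hs hb hb0 ha ha0 h.symm (h ▸ hfin) (le_of_not_ge hts)
  rw [← lintegral_const_mul _ (by fun_prop)]
  refine lintegral_mono fun v => ?_
  have hct : 0 < t := hc.trans_le ht
  rw [← ENNReal.ofReal_sub _ (div_nonneg (hb0 v) hct.le), ← ENNReal.ofReal_mul (by positivity)]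
  gcongr
  calc a v / s - b v / t
      ≤ a v / t - b v / t := by gcongr; exact ha0 v
    _ = (a v - b v) / t := (sub_div _ _ _).symm
    _ ≤ |a v - b v| / c := by gcongr; exact le_abs_self _
    _ = c⁻¹ * |a v - b v| := div_eq_inv_mul _ _

theorem wassersteinCost_comp_withDensity_div_integral_le {X : Type*} [PseudoMetricSpace X]
    [MeasurableSpace X] [OpensMeasurableSpace X] [SecondCountableTopology X] {κ κ' : Kernel V X}
    [IsMarkovKernel κ] [IsMarkovKernel κ'] {p : ℝ} (hp : 1 ≤ p) {o : X} {k : ℝ≥0∞} (hk : k ≠ ∞)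
    (hκ : ∀ᵐ v ∂m, ∫⁻ y, edist y o ^ p ∂κ v ≤ k) (hκ' : ∀ᵐ v ∂m, ∫⁻ y, edist y o ^ p ∂κ' v ≤ k)
    {h : V → ℝ≥0∞} (hh : Measurable h) (hle : ∀ᵐ v ∂m, wassersteinCost p (κ v) (κ' v) ≤ h v)
    (hc : 0 < c) (ha : Measurable a) (ha0 : ∀ v, 0 ≤ a v) {M : ℝ} (haM : ∀ v, a v ≤ M)
    (hac : c ≤ ∫ v, a v ∂m) (hb : Measurable b) (hb0 : ∀ v, 0 ≤ b v) (hbc : c ≤ ∫ v, b v ∂m) :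
    wassersteinCost p (κ ∘ₘ m.withDensity fun v => ENNReal.ofReal (a v / ∫ w, a w ∂m))
        (κ' ∘ₘ m.withDensity fun v => ENNReal.ofReal (b v / ∫ w, b w ∂m)) ≤
      ENNReal.ofReal (M / c) * ∫⁻ v, h v ∂m +
        2 ^ p * k * (ENNReal.ofReal c⁻¹ * ∫⁻ v, ENNReal.ofReal |a v - b v| ∂m) := by
  have ha1 := lintegral_ofReal_div_integral ha0 (hc.trans_le hac)
  have hab := ha1.trans (lintegral_ofReal_div_integral hb0 (hc.trans_le hbc)).symm
  have hfin := ha1.trans_ne ENNReal.one_ne_top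
  have hM (v : V) : ENNReal.ofReal (a v / ∫ w, a w ∂m) ≤ ENNReal.ofReal (M / c) :=
    ENNReal.ofReal_le_ofReal (div_le_div₀ ((ha0 v).trans (haM v)) (haM v) hc hac)
  refine (wassersteinCost_comp_withDensity_le hp hk hκ hκ' (by fun_prop) (by fun_prop) hab hfin
    (.of_forall hM) hh hle).trans ?_
  gcongr
  exact lintegral_ofReal_div_tsub_le hc hac hbc ha ha0 hb hb0 hab hfin

end NormalizedDensity

section GraphonAggregate

lemma IsGraphonAggregate.eq_comp_withDensity {E : Type*} [MeasurableSpace E] {G : ℝ → ℝ → ℝ}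
    {μ ν : ℝ → Measure E} (h : IsGraphonAggregate G μ ν) {κ : Kernel ℝ E}
    (hκ : ∀ᵐ v ∂volume.restrict (Set.Icc (0 : ℝ) 1), κ v = μ v) {u : ℝ}
    (hu : u ∈ Set.Icc (0 : ℝ) 1) (hG : Measurable (G u)) :
    ν u = κ ∘ₘ (volume.restrict (Set.Icc 0 1)).withDensity
      fun v => ENNReal.ofReal (G u v / ∫ w in Set.Icc 0 1, G u w) := by
  ext B hB
  rw [(h u hu).2 B hB, Measure.bind_apply hB κ.aemeasurable,
    lintegral_withDensity_eq_lintegral_mul _ (by fun_prop) (κ.measurable_coe hB)]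
  refine lintegral_congr_ae (hκ.mono fun v hv => ?_)
  simp only [gnorm, Pi.mul_apply, hv]

variable {E : Type*} [NormedAddCommGroup E]

lemma edist_rpow_two (x y : E) : edist x y ^ (2 : ℝ) = (‖x - y‖₊ : ℝ≥0∞) ^ 2 := by
  rw [ENNReal.rpow_two, edist_eq_enorm_sub, enorm_eq_nnnorm]

variable [MeasurableSpace E]

lemma W2sq_eq_wassersteinCost (μ ν : Measure E) [IsProbabilityMeasure μ] :
    W2sq μ ν = wassersteinCost 2 μ ν := by
  simp only [W2sq, wassersteinCost, transportCost, edist_rpow_two]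
  refine le_antisymm (le_iInf fun π => le_iInf₂ fun hμ hν => ?_)
    (le_iInf fun π => le_iInf fun _ => iInf_le _ π)
  have hπ : IsProbabilityMeasure π := by
    rw [isProbabilityMeasure_iff, ← Measure.fst_univ, hμ, measure_univ]
  exact iInf₂_le_of_le π hπ (iInf₂_le_of_le hμ hν le_rfl)

variable [BorelSpace E] [SecondCountableTopology E] {M c : ℝ} {G G' : ℝ → ℝ → ℝ}
  {μ μ' agg agg' : ℝ → Measure E}

lemma W2sq_graphonAggregate_le {k : ℝ≥0∞} (hk : k ≠ ∞) (hc : 0 < c)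
    (hμ : ∀ v ∈ Set.Icc (0 : ℝ) 1, IsProbabilityMeasure (μ v))
    (hμ' : ∀ v ∈ Set.Icc (0 : ℝ) 1, IsProbabilityMeasure (μ' v))
    (hμm : ∀ B : Set E, MeasurableSet B →
      AEMeasurable (fun v => μ v B) (volume.restrict (Set.Icc (0 : ℝ) 1)))
    (hμ'm : ∀ B : Set E, MeasurableSet B →
      AEMeasurable (fun v => μ' v B) (volume.restrict (Set.Icc (0 : ℝ) 1)))
    (hμk : ∀ v ∈ Set.Icc (0 : ℝ) 1, ∫⁻ x, (‖x‖₊ : ℝ≥0∞) ^ 2 ∂μ v ≤ k)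
    (hμ'k : ∀ v ∈ Set.Icc (0 : ℝ) 1, ∫⁻ x, (‖x‖₊ : ℝ≥0∞) ^ 2 ∂μ' v ≤ k)
    (hagg : IsGraphonAggregate G μ agg) (hagg' : IsGraphonAggregate G' μ' agg')
    {u : ℝ} (hu : u ∈ Set.Icc (0 : ℝ) 1) (hG : Measurable (G u)) (hG' : Measurable (G' u))
    (hG0 : ∀ v, 0 ≤ G u v) (hG'0 : ∀ v, 0 ≤ G' u v) (hGM : ∀ v, G u v ≤ M)
    (hGc : c ≤ ∫ v in Set.Icc (0 : ℝ) 1, G u v) (hG'c : c ≤ ∫ v in Set.Icc (0 : ℝ) 1, G' u v) :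
    W2sq (agg u) (agg' u) ≤
      ENNReal.ofReal (M / c) *
          upperLintegral (volume.restrict (Set.Icc (0 : ℝ) 1)) (fun v => W2sq (μ v) (μ' v)) +
        4 * k * (ENNReal.ofReal c⁻¹ *
          ∫⁻ v in Set.Icc (0 : ℝ) 1, ENNReal.ofReal |G u v - G' u v|) := by
  obtain ⟨κ, _, hκ⟩ :=
    exists_isMarkovKernel_ae_eq (ae_restrict_of_forall_mem measurableSet_Icc hμ) hμm
  obtain ⟨κ', _, hκ'⟩ :=
    exists_isMarkovKernel_ae_eq (ae_restrict_of_forall_mem measurableSet_Icc hμ') hμ'm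
  obtain ⟨h, hh, hle, h_lintegral⟩ := exists_measurable_ge_lintegral_eq_upperLintegral
    (volume.restrict (Set.Icc (0 : ℝ) 1)) (fun v => W2sq (μ v) (μ' v))
  have hW : ∀ᵐ v ∂volume.restrict (Set.Icc (0 : ℝ) 1), wassersteinCost 2 (κ v) (κ' v) ≤ h v := by
    filter_upwards [hκ, hκ'] with v hv hv'
    rw [← W2sq_eq_wassersteinCost, hv, hv']
    exact hle v
  have moment {θ : ℝ → Measure E} {κ : Kernel ℝ E}
      (hκ : ∀ᵐ v ∂volume.restrict (Set.Icc (0 : ℝ) 1), κ v = θ v)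
      (hθ : ∀ v ∈ Set.Icc (0 : ℝ) 1, ∫⁻ x, (‖x‖₊ : ℝ≥0∞) ^ 2 ∂θ v ≤ k) :
      ∀ᵐ v ∂volume.restrict (Set.Icc (0 : ℝ) 1), ∫⁻ x, edist x 0 ^ (2 : ℝ) ∂κ v ≤ k := by
    filter_upwards [hκ, ae_restrict_of_forall_mem measurableSet_Icc hθ] with v hv hk
    simpa only [hv, edist_rpow_two, sub_zero] using hk
  have two_rpow_two : (2 : ℝ≥0∞) ^ (2 : ℝ) = 4 := by rw [ENNReal.rpow_two]; norm_num
  have := (hagg u hu).1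
  rw [W2sq_eq_wassersteinCost, hagg.eq_comp_withDensity hκ hu hG,
    hagg'.eq_comp_withDensity hκ' hu hG', ← h_lintegral, ← two_rpow_two]
  exact wassersteinCost_comp_withDensity_div_integral_le one_le_two hk (moment hκ hμk)
    (moment hκ' hμ'k) hh hW hc hG hG0 hGM hGc hG' hG'0 hG'c

theorem graphon_aggregate_joint_stability_general (K : ℝ) (hc : 0 < c)
    (hG : Measurable (Function.uncurry G)) (hG' : Measurable (Function.uncurry G'))
    (hG0 : ∀ u v, 0 ≤ G u v) (hG'0 : ∀ u v, 0 ≤ G' u v) (hGM : ∀ u v, G u v ≤ M)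
    (hGc : ∀ u ∈ Set.Icc (0 : ℝ) 1, c ≤ ∫ v in Set.Icc (0 : ℝ) 1, G u v)
    (hG'c : ∀ u ∈ Set.Icc (0 : ℝ) 1, c ≤ ∫ v in Set.Icc (0 : ℝ) 1, G' u v)
    (hμ : ∀ u ∈ Set.Icc (0 : ℝ) 1, IsProbabilityMeasure (μ u))
    (hμ' : ∀ u ∈ Set.Icc (0 : ℝ) 1, IsProbabilityMeasure (μ' u))
    (hμm : ∀ B : Set E, MeasurableSet B →
      AEMeasurable (fun u => μ u B) (volume.restrict (Set.Icc (0 : ℝ) 1)))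
    (hμ'm : ∀ B : Set E, MeasurableSet B →
      AEMeasurable (fun u => μ' u B) (volume.restrict (Set.Icc (0 : ℝ) 1)))
    (hμK : ∀ u ∈ Set.Icc (0 : ℝ) 1, ∫⁻ x, (‖x‖₊ : ℝ≥0∞) ^ 2 ∂μ u ≤ ENNReal.ofReal K)
    (hμ'K : ∀ u ∈ Set.Icc (0 : ℝ) 1, ∫⁻ x, (‖x‖₊ : ℝ≥0∞) ^ 2 ∂μ' u ≤ ENNReal.ofReal K)
    (hagg : IsGraphonAggregate G μ agg) (hagg' : IsGraphonAggregate G' μ' agg') :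
    upperLintegral (volume.restrict (Set.Icc (0 : ℝ) 1)) (fun u => W2sq (agg u) (agg' u)) ≤
      ENNReal.ofReal (max M (4 * K) / c) *
        ((∫⁻ u in Set.Icc (0 : ℝ) 1, ∫⁻ v in Set.Icc (0 : ℝ) 1, ENNReal.ofReal |G u v - G' u v|) +
          upperLintegral (volume.restrict (Set.Icc (0 : ℝ) 1)) (fun u => W2sq (μ u) (μ' u))) := by
  set J : ℝ → ℝ≥0∞ := fun u => ∫⁻ v in Set.Icc (0 : ℝ) 1, ENNReal.ofReal |G u v - G' u v|
  set U := upperLintegral (volume.restrict (Set.Icc (0 : ℝ) 1)) (fun u => W2sq (μ u) (μ' u))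
  have hJ : Measurable J :=
    Measurable.lintegral_prod_right' (f := fun z : ℝ × ℝ => ENNReal.ofReal |G z.1 z.2 - G' z.1 z.2|)
      (hG.sub hG').abs.ennreal_ofReal
  have hK : 4 * ENNReal.ofReal K * ENNReal.ofReal c⁻¹ = ENNReal.ofReal (4 * K / c) := by
    rw [div_eq_mul_inv, ENNReal.ofReal_mul' (inv_nonneg.2 hc.le), ENNReal.ofReal_mul zero_le_four,
      ENNReal.ofReal_ofNat]
  have hpointwise (u : ℝ) (hu : u ∈ Set.Icc (0 : ℝ) 1) :
      W2sq (agg u) (agg' u) ≤ ENNReal.ofReal (max M (4 * K) / c) * (J u + U) := by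
    calc W2sq (agg u) (agg' u)
        ≤ ENNReal.ofReal (M / c) * U + 4 * ENNReal.ofReal K * (ENNReal.ofReal c⁻¹ * J u) :=
          W2sq_graphonAggregate_le ENNReal.ofReal_ne_top hc hμ hμ' hμm hμ'm hμK hμ'K hagg hagg' hu
            hG.of_uncurry_left hG'.of_uncurry_left (hG0 u) (hG'0 u) (hGM u) (hGc u hu) (hG'c u hu)
      _ = ENNReal.ofReal (4 * K / c) * J u + ENNReal.ofReal (M / c) * U := by
          rw [← mul_assoc, hK, add_comm]
      _ ≤ ENNReal.ofReal (max M (4 * K) / c) * (J u + U) := by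
          rw [mul_add]
          gcongr
          exacts [le_max_right _ _, le_max_left _ _]
  calc upperLintegral (volume.restrict (Set.Icc (0 : ℝ) 1)) (fun u => W2sq (agg u) (agg' u))
      ≤ ∫⁻ u in Set.Icc (0 : ℝ) 1, ENNReal.ofReal (max M (4 * K) / c) * (J u + U) :=
        upperLintegral_le_lintegral_of_ae_le (by fun_prop)
          (ae_restrict_of_forall_mem measurableSet_Icc hpointwise)
    _ = ENNReal.ofReal (max M (4 * K) / c) * ((∫⁻ u in Set.Icc (0 : ℝ) 1, J u) + U) := by
        rw [lintegral_const_mul _ (by fun_prop), lintegral_add_left hJ, setLIntegral_const,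
          Real.volume_Icc, sub_zero, ENNReal.ofReal_one, mul_one]

end GraphonAggregate

/-- **Joint stability of the graphon aggregate in the graphon and the measure family**:
`∫₀¹ W₂²([Gμ]^u, [G'μ']^u) du ≤ C ( ‖G − G'‖_{L¹} + ∫₀¹ W₂²(μ^u, μ'^u) du )`, with `C`
depending only on `M`, `c` and `K`. -/
theorem graphon_aggregate_joint_stability
    (d : ℕ) (M c K : ℝ) (hc : 0 < c) :
    ∃ C : ℝ, 0 < C ∧
      ∀ G G' : ℝ → ℝ → ℝ,
        Measurable (Function.uncurry G) → Measurable (Function.uncurry G') →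
        (∀ u v, G u v = G v u) → (∀ u v, G' u v = G' v u) →
        (∀ u v, 0 ≤ G u v) → (∀ u v, 0 ≤ G' u v) →
        (∀ u v, G u v ≤ M) → (∀ u v, G' u v ≤ M) →
        (∀ u ∈ Set.Icc (0:ℝ) 1, c ≤ ∫ v in Set.Icc (0:ℝ) 1, G u v) →
        (∀ u ∈ Set.Icc (0:ℝ) 1, c ≤ ∫ v in Set.Icc (0:ℝ) 1, G' u v) →
        ∀ μ μ' : ℝ → Measure (EuclideanSpace ℝ (Fin d)),
          (∀ u ∈ Set.Icc (0:ℝ) 1, IsProbabilityMeasure (μ u)) →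
          (∀ u ∈ Set.Icc (0:ℝ) 1, IsProbabilityMeasure (μ' u)) →
          (∀ B : Set (EuclideanSpace ℝ (Fin d)), MeasurableSet B →
            AEMeasurable (fun u => μ u B) (volume.restrict (Set.Icc (0:ℝ) 1))) →
          (∀ B : Set (EuclideanSpace ℝ (Fin d)), MeasurableSet B →
            AEMeasurable (fun u => μ' u B) (volume.restrict (Set.Icc (0:ℝ) 1))) →
          (∀ u ∈ Set.Icc (0:ℝ) 1,
            ∫⁻ x, (‖x‖₊ : ℝ≥0∞) ^ 2 ∂(μ u) ≤ ENNReal.ofReal K) →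
          (∀ u ∈ Set.Icc (0:ℝ) 1,
            ∫⁻ x, (‖x‖₊ : ℝ≥0∞) ^ 2 ∂(μ' u) ≤ ENNReal.ofReal K) →
          ∀ agg agg' : ℝ → Measure (EuclideanSpace ℝ (Fin d)),
            IsGraphonAggregate G μ agg → IsGraphonAggregate G' μ' agg' →
            upperLintegral (volume.restrict (Set.Icc (0:ℝ) 1))
                (fun u => W2sq (agg u) (agg' u)) ≤
              ENNReal.ofReal C *
                ((∫⁻ u in Set.Icc (0:ℝ) 1, ∫⁻ v in Set.Icc (0:ℝ) 1,
                    ENNReal.ofReal |G u v - G' u v|) +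
                  upperLintegral (volume.restrict (Set.Icc (0:ℝ) 1))
                    (fun u => W2sq (μ u) (μ' u))) := by
  refine ⟨max 1 (max M (4 * K) / c), by positivity, fun G G' hG hG' _ _ hG0 hG'0 hGM _ hGc hG'c
    μ μ' hμ hμ' hμm hμ'm hμK hμ'K agg agg' hagg hagg' => ?_⟩
  refine (graphon_aggregate_joint_stability_general K hc hG hG' hG0 hG'0 hGM hGc hG'c hμ hμ' hμm
    hμ'm hμK hμ'K hagg hagg').trans ?_
  gcongr
  exact le_max_right _ _

end
end

section
/- Let C₀ > 0 and ε > 0, and let 𝔓 = { ν : ν is a Borel probability measure on ℝ^d with ∫ |x|^{2+ε} dν(x) ≤ C₀ }, endowed with the topology of weak convergence. Then there exists a continuous map T : 𝔓 → L²((0,1), Lebesgue; ℝ^d) such that for every ν ∈ 𝔓, the pushforward of the Lebesgue measure on (0,1) under (a representative of) T(ν) equals ν. -/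
open MeasureTheory ENNReal

noncomputable section

/-!
On a totally ordered space, weak convergence of measures implies almost everywhere convergence of
their quantile functions. A separable metric space `X` is reduced to this case by an injective code
`X → [0, 1]` recording in which balls, out of a countable family, a point lies. Convergence of
codes implies convergence of points, but the code is discontinuous on the spheres bounding the
balls, which may carry mass. When a common random amount `θ` is added to all radii, almost every
choice of `θ` makes these spheres null for the limit measure `ν`, and the continuous mapping theorem
applies. Thus `(θ, u) ↦ (decoded quantile at u)` has law `ν` and depends on `ν` continuously almost
everywhere; the pair `(θ, u)` is itself a function of one uniform variable. Finally, a bound on a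
moment of order larger than `p` gives uniform integrability, which upgrades this convergence to
convergence in `L^p`.
-/

open Set Filter Function Topology
open TopologicalSpace (denseSeq denseRange_denseSeq exists_countable_dense PseudoMetrizableSpace)
open scoped unitInterval

section Quantile

variable {α : Type*} [CompleteLinearOrder α] [MeasurableSpace α]

/-- The quantile function of `μ`, the generalized inverse of `t ↦ μ (Iic t)`. Completeness of the
order makes the infimum meaningful at every `u`, including the endpoints. -/
def quantile (μ : Measure α) (u : I) : α :=
  sInf {t | ENNReal.ofReal u ≤ μ (Iic t)}

variable [TopologicalSpace α] [OrderTopology α] [SecondCountableTopology α] [BorelSpace α]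

theorem quantile_le_iff (μ : Measure α) [IsProbabilityMeasure μ] {u : I} {t : α} :
    quantile μ u ≤ t ↔ ENNReal.ofReal u ≤ μ (Iic t) := by
  refine ⟨fun h ↦ ?_, fun h ↦ sInf_le h⟩
  have hne : {t | ENNReal.ofReal u ≤ μ (Iic t)}.Nonempty := ⟨⊤, by simpa using u.2.2⟩
  obtain ⟨s, hs_anti, hs_lim, hs⟩ := exists_seq_tendsto_sInf hne (OrderBot.bddBelow _)
  have hs_glb : IsGLB (range s) (quantile μ u) := isGLB_of_tendsto_atTop hs_anti hs_lim
  have hs_inf : ⋂ n, Iic (s n) = Iic (quantile μ u) := by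
    ext t
    simpa [mem_lowerBounds] using (le_isGLB_iff hs_glb (b := t)).symm
  have hμ := tendsto_measure_iInter_atTop (μ := μ) (s := fun n ↦ Iic (s n))
    (fun _ ↦ measurableSet_Iic.nullMeasurableSet)
    (fun _ _ hmn ↦ Iic_subset_Iic.2 (hs_anti hmn)) ⟨0, measure_ne_top _ _⟩
  rw [hs_inf] at hμ
  exact (ge_of_tendsto' hμ hs).trans (measure_mono (Iic_subset_Iic.2 h))

theorem measurable_quantile_uncurry {β : Type*} [MeasurableSpace β] {κ : β → Measure α}
    [∀ b, IsProbabilityMeasure (κ b)] (hκ : Measurable κ) :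
    Measurable fun p : β × I ↦ quantile (κ p.1) p.2 := by
  refine measurable_of_Iic fun t ↦ ?_
  simp only [preimage, mem_Iic, quantile_le_iff]
  have hκt : Measurable fun b ↦ κ b (Iic t) := Measure.measurable_coe measurableSet_Iic |>.comp hκ
  exact measurableSet_le (by fun_prop) (by fun_prop)

theorem volume_setOf_ofReal_le {a : ℝ≥0∞} (ha : a ≤ 1) :
    volume {u : I | ENNReal.ofReal u ≤ a} = a := by
  have ha_top : a ≠ ∞ := ne_top_of_le_ne_top one_ne_top ha
  let x : I := ⟨a.toReal, toReal_nonneg, toReal_le_of_le_ofReal zero_le_one (by simpa using ha)⟩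
  have : {u : I | ENNReal.ofReal u ≤ a} = Iic x := by
    ext u
    exact ofReal_le_iff_le_toReal ha_top
  rw [this, unitInterval.volume_Iic, ofReal_toReal ha_top]

theorem measurePreserving_quantile (μ : Measure α) [IsProbabilityMeasure μ] :
    MeasurePreserving (quantile μ) volume μ := by
  have hmeas : Measurable (quantile μ) :=
    (measurable_quantile_uncurry (β := Unit) (κ := fun _ ↦ μ) measurable_const).comp
      (measurable_prodMk_left (x := ()))
  refine ⟨hmeas, ?_⟩
  have := Measure.isProbabilityMeasure_map (μ := volume) hmeas.aemeasurable
  refine Measure.ext_of_Iic _ _ fun t ↦ ?_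
  rw [Measure.map_apply hmeas measurableSet_Iic]
  simp only [preimage, mem_Iic, quantile_le_iff, volume_setOf_ofReal_le prob_le_one]

theorem ae_tendsto_quantile [DenselyOrdered α] {ι : Type*} {l : Filter ι}
    {μs : ι → ProbabilityMeasure α} {μ : ProbabilityMeasure α} (h : Tendsto μs l (𝓝 μ)) :
    ∀ᵐ u, Tendsto (fun i ↦ quantile (μs i : Measure α) u) l (𝓝 (quantile (μ : Measure α) u)) := by
  -- If `t ↦ μ (Iic t)` avoids `u` on a dense set, then strict inequalities determine
  -- `quantile μ u`, and these survive weak convergence.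
  obtain ⟨D, hD_countable, hD⟩ := exists_countable_dense α
  let levels : Set I := (fun u : I ↦ ENNReal.ofReal u) ⁻¹' ((fun d ↦ (μ : Measure α) (Iic d)) '' D)
  have hlevels : levels.Countable := (hD_countable.image _).preimage_of_injOn fun u _ v _ huv ↦
    Subtype.ext ((ofReal_eq_ofReal_iff u.2.1 v.2.1).1 huv)
  filter_upwards [hlevels.ae_notMem volume] with u hu
  refine tendsto_order.2 ⟨fun a ha ↦ ?_, fun a ha ↦ ?_⟩
  · obtain ⟨t, hat, htq⟩ := exists_between ha
    have hlimsup : l.limsup (fun i ↦ (μs i : Measure α) (Iic t)) < ENNReal.ofReal u :=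
      (ProbabilityMeasure.limsup_measure_closed_le_of_tendsto h isClosed_Iic).trans_lt
        (not_le.1 fun hle ↦ htq.not_ge ((quantile_le_iff _).2 hle))
    filter_upwards [eventually_lt_of_limsup_lt hlimsup] with i hi
    exact hat.trans (not_le.1 fun hle ↦ hi.not_ge ((quantile_le_iff _).1 hle))
  · obtain ⟨t, hqt, hta⟩ := exists_between ha
    obtain ⟨d, hdD, hqd, hdt⟩ := hD.exists_between hqt
    have hud : ENNReal.ofReal u < (μ : Measure α) (Iic d) :=
      ((quantile_le_iff _).1 hqd.le).lt_of_ne fun heq ↦ hu ⟨d, hdD, heq.symm⟩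
    have hliminf : ENNReal.ofReal u < l.liminf fun i ↦ (μs i : Measure α) (Iio t) :=
      hud.trans_le ((measure_mono (Iic_subset_Iio.2 hdt)).trans
        (ProbabilityMeasure.le_liminf_measure_open_of_tendsto h isOpen_Iio))
    filter_upwards [eventually_lt_of_lt_liminf hliminf] with i hi
    exact ((quantile_le_iff _).2 (hi.le.trans (measure_mono Iio_subset_Iic_self))).trans_lt hta

end Quantile

theorem tendsto_map_of_tendsto_of_ae_continuousAt {X Y ι : Type*} [TopologicalSpace X]
    [MeasurableSpace X] [OpensMeasurableSpace X] [HasOuterApproxClosed X] [TopologicalSpace Y]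
    [MeasurableSpace Y] [OpensMeasurableSpace Y] {l : Filter ι} [l.IsCountablyGenerated]
    {νs : ι → ProbabilityMeasure X} {ν : ProbabilityMeasure X} (h : Tendsto νs l (𝓝 ν))
    {f : X → Y} (hf : Measurable f) (hfν : ∀ᵐ x ∂(ν : Measure X), ContinuousAt f x) :
    Tendsto (fun i ↦ (νs i).map hf.aemeasurable) l (𝓝 (ν.map hf.aemeasurable)) := by
  refine tendsto_of_forall_isOpen_le_liminf' fun G hG ↦ ?_
  simp only [ProbabilityMeasure.toMeasure_map, Measure.map_apply hf hG.measurableSet]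
  calc (ν : Measure X) (f ⁻¹' G)
      ≤ (ν : Measure X) (interior (f ⁻¹' G)) := by
        refine measure_mono_ae ?_
        filter_upwards [hfν] with x hx hxG
        exact mem_interior_iff_mem_nhds.2 (hx (hG.mem_nhds hxG))
    _ ≤ l.liminf fun i ↦ (νs i : Measure X) (interior (f ⁻¹' G)) :=
        ProbabilityMeasure.le_liminf_measure_open_of_tendsto h isOpen_interior
    _ ≤ l.liminf fun i ↦ (νs i : Measure X) (f ⁻¹' G) :=
        liminf_le_liminf (.of_forall fun _ ↦ measure_mono interior_subset)

theorem injective_of_comap_nhds_le {X Y : Type*} [TopologicalSpace X] [T1Space X]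
    [TopologicalSpace Y] {c : X → Y} (hc : ∀ x, comap c (𝓝 (c x)) ≤ 𝓝 x) : Injective c := by
  intro x y hxy
  refine pure_le_nhds_iff.1 (le_trans ?_ (hc y))
  rw [← hxy, ← map_le_iff_le_comap]
  exact pure_le_nhds _

section Parametrized

variable {Θ X Y : Type*} [MeasurableSpace Θ] [MeasurableSpace X] [MeasurableSpace Y]

theorem measurable_map_of_measurable_uncurry {c : Θ → X → Y} (hc : Measurable (uncurry c))
    (μ : Measure X) [SFinite μ] : Measurable fun θ ↦ μ.map (c θ) := by
  refine Measure.measurable_of_measurable_coe _ fun s hs ↦ ?_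
  simp only [Measure.map_apply hc.of_uncurry_left hs]
  exact measurable_measure_prodMk_left (hc hs)

theorem exists_measurable_leftInverse [StandardBorelSpace Θ] [Nonempty Θ] [StandardBorelSpace X]
    [Nonempty X] [StandardBorelSpace Y] {c : Θ → X → Y} (hc : Measurable (uncurry c))
    (hc_inj : ∀ θ, Injective (c θ)) :
    ∃ d : Θ → Y → X, Measurable (uncurry d) ∧ ∀ θ, LeftInverse (d θ) (c θ) := by
  have hgraph : MeasurableEmbedding fun p : Θ × X ↦ (p.1, c p.1 p.2) := by
    refine Measurable.measurableEmbedding (measurable_fst.prodMk hc) ?_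
    rintro ⟨θ, x⟩ ⟨θ', x'⟩ h
    obtain ⟨rfl, h⟩ := Prod.mk.inj h
    exact Prod.ext rfl (hc_inj _ h)
  refine ⟨fun θ y ↦ (hgraph.invFun (θ, y)).2, measurable_snd.comp hgraph.measurable_invFun,
    fun θ x ↦ ?_⟩
  exact congrArg Prod.snd (hgraph.leftInverse_invFun (θ, x))

end Parametrized

section DecodedQuantile

variable {X α : Type*} [MeasurableSpace X] [CompleteLinearOrder α] [MeasurableSpace α]

/-- The quantile function of a measure `μ` on a space without order: `μ` is pushed to `α` by the
code `c`, and the quantiles of the image are pulled back by the decoder `d`, meant to be a left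
inverse of `c`. -/
def decodedQuantile (c : X → α) (d : α → X) (μ : Measure X) (u : I) : X :=
  d (quantile (μ.map c) u)

variable [TopologicalSpace α] [OrderTopology α] [SecondCountableTopology α] [BorelSpace α]
  {c : X → α} {d : α → X}

theorem measurePreserving_decodedQuantile (hc : Measurable c) (hd : Measurable d)
    (hdc : LeftInverse d c) (μ : Measure X) [IsProbabilityMeasure μ] :
    MeasurePreserving (decodedQuantile c d μ) volume μ := by
  have := Measure.isProbabilityMeasure_map (μ := μ) hc.aemeasurable
  have hd_pres : MeasurePreserving d (μ.map c) μ :=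
    ⟨hd, by rw [Measure.map_map hd hc, hdc.comp_eq_id, Measure.map_id]⟩
  exact hd_pres.comp (measurePreserving_quantile _)

theorem ae_apply_decodedQuantile_eq (hc : Measurable c) (hd : Measurable d)
    (hdc : LeftInverse d c) (μ : Measure X) [IsProbabilityMeasure μ] :
    ∀ᵐ u, c (decodedQuantile c d μ u) = quantile (μ.map c) u := by
  have := Measure.isProbabilityMeasure_map (μ := μ) hc.aemeasurable
  have hcd : ∀ᵐ y ∂μ.map c, c (d y) = y :=
    (ae_map_iff hc.aemeasurable (measurableSet_eq_fun (hc.comp hd) measurable_id)).2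
      (ae_of_all _ fun x ↦ congrArg c (hdc x))
  exact (measurePreserving_quantile _).quasiMeasurePreserving.ae hcd

theorem ae_tendsto_decodedQuantile [DenselyOrdered α] [TopologicalSpace X]
    [OpensMeasurableSpace X] [HasOuterApproxClosed X] {ι : Type*} [Countable ι] {l : Filter ι}
    [l.IsCountablyGenerated] {νs : ι → ProbabilityMeasure X} {ν : ProbabilityMeasure X}
    (h : Tendsto νs l (𝓝 ν)) (hc : Measurable c) (hd : Measurable d) (hdc : LeftInverse d c)
    (hc_nhds : ∀ x, comap c (𝓝 (c x)) ≤ 𝓝 x) (hcν : ∀ᵐ x ∂(ν : Measure X), ContinuousAt c x) :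
    ∀ᵐ u, Tendsto (fun i ↦ decodedQuantile c d (νs i : Measure X) u) l
      (𝓝 (decodedQuantile c d (ν : Measure X) u)) := by
  have hquantile := ae_tendsto_quantile (tendsto_map_of_tendsto_of_ae_continuousAt h hc hcν)
  simp only [ProbabilityMeasure.toMeasure_map] at hquantile
  filter_upwards [hquantile, ae_apply_decodedQuantile_eq hc hd hdc ν,
    ae_all_iff.2 fun i ↦ ae_apply_decodedQuantile_eq hc hd hdc (νs i : Measure X)]
    with u hu hν hνs
  refine Tendsto.mono_right (tendsto_comap_iff.2 ?_) (hc_nhds _)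
  simpa only [comp_def, hν, hνs] using hu

variable {Θ : Type*} [MeasurableSpace Θ]

theorem measurable_decodedQuantile_uncurry {c : Θ → X → α} {d : Θ → α → X}
    (hc : Measurable (uncurry c)) (hd : Measurable (uncurry d))
    (μ : Measure X) [IsProbabilityMeasure μ] :
    Measurable fun p : Θ × I ↦ decodedQuantile (c p.1) (d p.1) μ p.2 := by
  have (θ : Θ) : IsProbabilityMeasure (μ.map (c θ)) :=
    Measure.isProbabilityMeasure_map hc.of_uncurry_left.aemeasurable
  exact hd.comp (measurable_fst.prodMk
    (measurable_quantile_uncurry (measurable_map_of_measurable_uncurry hc μ)))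

theorem measurePreserving_decodedQuantile_uncurry {c : Θ → X → α} {d : Θ → α → X}
    (hc : Measurable (uncurry c)) (hd : Measurable (uncurry d))
    (hdc : ∀ θ, LeftInverse (d θ) (c θ)) (P : Measure Θ) [IsProbabilityMeasure P]
    (μ : Measure X) [IsProbabilityMeasure μ] :
    MeasurePreserving (fun p : Θ × I ↦ decodedQuantile (c p.1) (d p.1) μ p.2)
      (P.prod volume) μ :=
  measurePreserving_snd.comp <| (MeasurePreserving.id P).skew_product
    (measurable_decodedQuantile_uncurry hc hd μ) <|
    ae_of_all _ fun θ ↦ (measurePreserving_decodedQuantile hc.of_uncurry_left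
      hd.of_uncurry_left (hdc θ) μ).map_eq

theorem ae_tendsto_decodedQuantile_uncurry [DenselyOrdered α] [TopologicalSpace X]
    [PseudoMetrizableSpace X] [SecondCountableTopology X] [BorelSpace X]
    {νs : ℕ → ProbabilityMeasure X} {ν : ProbabilityMeasure X} (h : Tendsto νs atTop (𝓝 ν))
    {c : Θ → X → α} {d : Θ → α → X}
    (hc : Measurable (uncurry c)) (hd : Measurable (uncurry d))
    (hdc : ∀ θ, LeftInverse (d θ) (c θ)) (hc_nhds : ∀ θ x, comap (c θ) (𝓝 (c θ x)) ≤ 𝓝 x)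
    (P : Measure Θ) (hcν : ∀ᵐ θ ∂P, ∀ᵐ x ∂(ν : Measure X), ContinuousAt (c θ) x) :
    ∀ᵐ p : Θ × I ∂P.prod volume,
      Tendsto (fun n ↦ decodedQuantile (c p.1) (d p.1) (νs n : Measure X) p.2) atTop
        (𝓝 (decodedQuantile (c p.1) (d p.1) (ν : Measure X) p.2)) := by
  have hmeas (μ : ProbabilityMeasure X) := measurable_decodedQuantile_uncurry hc hd (μ : Measure X)
  refine (Measure.ae_prod_iff_ae_ae
    (measurableSet_tendsto_fun (fun n ↦ hmeas (νs n)) (hmeas ν))).2 ?_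
  filter_upwards [hcν] with θ hθ
  exact ae_tendsto_decodedQuantile h hc.of_uncurry_left hd.of_uncurry_left (hdc θ) (hc_nhds θ) hθ

end DecodedQuantile

section BallCode

/-- The embedding of the binary families indexed by `ℕ × ℚ` into `[0, 1]` whose image is the Cantor
set; `ℕ × ℚ` is the index set of `ballCode`. -/
def cantorEmbedding : (ℕ × ℚ → Bool) → I :=
  inclusion cantorSet_subset_unitInterval ∘ cantorSetHomeomorphNatToBool.symm ∘
    Homeomorph.piCongrLeft (Y := fun _ ↦ Bool) (Denumerable.eqv (ℕ × ℚ))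

theorem isEmbedding_cantorEmbedding : IsEmbedding cantorEmbedding :=
  (IsEmbedding.inclusion _).comp <|
    cantorSetHomeomorphNatToBool.symm.isEmbedding.comp (Homeomorph.isEmbedding _)

variable {X : Type*} [MetricSpace X] [SecondCountableTopology X] [Nonempty X]

/-- The answers to all the questions "does `x` lie in the ball of radius `q + θ` around the `k`-th
point of a dense sequence?". The shift `θ` is there to be chosen at random, so that the spheres
bounding these balls carry no mass. -/
def ballCode (θ : I) (x : X) : ℕ × ℚ → Bool :=
  fun n ↦ decide (dist x (denseSeq X n.1) < n.2 + θ)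

theorem continuousAt_ballCode {θ : I} {x : X}
    (hx : ∀ k, ∀ q : ℚ, dist x (denseSeq X k) ≠ q + θ) :
    ContinuousAt (ballCode θ) x := by
  refine continuousAt_pi.2 fun ⟨k, q⟩ ↦ ?_
  have hdist : ContinuousAt (fun y ↦ dist y (denseSeq X k)) x := by fun_prop
  refine continuousAt_const.congr (f := fun _ ↦ ballCode θ x (k, q)) ?_
  rcases (hx k q).lt_or_gt with hlt | hgt
  · filter_upwards [hdist.eventually_lt_const hlt] with y hy
    simp [ballCode, hlt, hy]
  · filter_upwards [hdist.eventually_const_lt hgt] with y hy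
    simp [ballCode, hgt.not_gt, hy.not_gt]

theorem comap_ballCode_nhds_le (θ : I) (x : X) : comap (ballCode θ) (𝓝 (ballCode θ x)) ≤ 𝓝 x := by
  refine Metric.nhds_basis_ball.ge_iff.2 fun ε hε ↦ ?_
  obtain ⟨k, hk⟩ := (denseRange_denseSeq X).exists_dist_lt x (half_pos hε)
  obtain ⟨q, hkq, hqε⟩ := exists_rat_btwn (sub_lt_sub_right hk (θ : ℝ))
  have hball : ∀ᶠ b in 𝓝 (ballCode θ x), b (k, q) = ballCode θ x (k, q) :=
    (continuous_apply (k, q)).continuousAt.eventually_mem (isOpen_discrete {_} |>.mem_nhds rfl)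
  filter_upwards [preimage_mem_comap hball] with y hy
  have hxk : dist x (denseSeq X k) < q + θ := by linarith
  have hyk : dist y (denseSeq X k) < q + θ := by
    simpa [ballCode, hxk] using hy
  exact (dist_triangle_right y x _).trans_lt (by linarith)

theorem measurable_ballCode_uncurry [MeasurableSpace X] [OpensMeasurableSpace X] :
    Measurable (uncurry (ballCode (X := X))) := by
  refine measurable_pi_iff.2 fun n ↦ measurable_to_bool ?_
  simp only [preimage, mem_singleton_iff, uncurry, ballCode, decide_eq_true_eq]
  exact measurableSet_lt (by fun_prop) (by fun_prop)

theorem ae_ae_continuousAt_ballCode [MeasurableSpace X] [OpensMeasurableSpace X] (ν : Measure X)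
    [SFinite ν] : ∀ᵐ θ : I, ∀ᵐ x ∂ν, ContinuousAt (ballCode θ) x := by
  let good : I → X → Prop := fun θ x ↦ ∀ k, ∀ q : ℚ, dist x (denseSeq X k) ≠ q + θ
  have hmeas : MeasurableSet {p : I × X | good p.1 p.2} := by
    simp only [good, ofPred_forall]
    refine .iInter fun k ↦ .iInter fun q ↦ (measurableSet_eq_fun ?_ ?_).compl <;> fun_prop
  have hgood : ∀ x, ∀ᵐ θ : I, good θ x := by
    refine fun x ↦ ae_all_iff.2 fun k ↦ ae_all_iff.2 fun q ↦ ?_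
    have hbad : {θ : I | dist x (denseSeq X k) = q + θ}.Subsingleton :=
      fun θ hθ θ' hθ' ↦ Subtype.ext (add_left_cancel (hθ.symm.trans hθ'))
    exact measure_eq_zero_iff_ae_notMem.1 (hbad.measure_zero volume)
  filter_upwards [(Measure.ae_ae_comm (μ := volume) (ν := ν) hmeas).2 (ae_of_all _ hgood)] with θ hθ
  exact hθ.mono fun x hx ↦ continuousAt_ballCode hx

end BallCode

section Skorokhod

variable {X : Type*} [MetricSpace X] [SecondCountableTopology X] [Nonempty X]

/-- `ballCode`, made interval-valued so that quantiles can be taken. -/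
def intervalCode (θ : I) (x : X) : I :=
  cantorEmbedding (ballCode θ x)

theorem comap_intervalCode_nhds_le (θ : I) (x : X) :
    comap (intervalCode θ) (𝓝 (intervalCode θ x)) ≤ 𝓝 x := by
  refine le_trans (le_of_eq ?_) (comap_ballCode_nhds_le θ x)
  rw [isEmbedding_cantorEmbedding.nhds_eq_comap, comap_comap]
  rfl

theorem measurable_intervalCode_uncurry [MeasurableSpace X] [OpensMeasurableSpace X] :
    Measurable (uncurry (intervalCode (X := X))) :=
  isEmbedding_cantorEmbedding.continuous.measurable.comp measurable_ballCode_uncurry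

theorem ae_ae_continuousAt_intervalCode [MeasurableSpace X] [OpensMeasurableSpace X]
    (ν : Measure X) [SFinite ν] : ∀ᵐ θ : I, ∀ᵐ x ∂ν, ContinuousAt (intervalCode θ) x := by
  filter_upwards [ae_ae_continuousAt_ballCode ν] with θ hθ
  filter_upwards [hθ] with x hx
  exact isEmbedding_cantorEmbedding.continuous.continuousAt.comp hx

theorem exists_measurePreserving_prod_ae_tendsto (X : Type*) [MetricSpace X]
    [SecondCountableTopology X] [Nonempty X] [MeasurableSpace X] [BorelSpace X]
    [StandardBorelSpace X] :
    ∃ ρ : ProbabilityMeasure X → I × I → X,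
      (∀ ν, MeasurePreserving (ρ ν) volume (ν : Measure X)) ∧
      ∀ (νs : ℕ → ProbabilityMeasure X) (ν : ProbabilityMeasure X), Tendsto νs atTop (𝓝 ν) →
        ∀ᵐ p, Tendsto (fun n ↦ ρ (νs n) p) atTop (𝓝 (ρ ν p)) := by
  obtain ⟨d, hd, hdc⟩ := exists_measurable_leftInverse (measurable_intervalCode_uncurry (X := X))
    fun θ ↦ injective_of_comap_nhds_le (comap_intervalCode_nhds_le θ)
  let ρ (ν : ProbabilityMeasure X) (p : I × I) : X :=
    decodedQuantile (intervalCode p.1) (d p.1) (ν : Measure X) p.2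
  have hρ (ν : ProbabilityMeasure X) : MeasurePreserving (ρ ν) volume (ν : Measure X) :=
    measurePreserving_decodedQuantile_uncurry measurable_intervalCode_uncurry hd hdc volume ν
  exact ⟨ρ, hρ, fun νs ν h ↦ ae_tendsto_decodedQuantile_uncurry h
    measurable_intervalCode_uncurry hd hdc comap_intervalCode_nhds_le volume
    (ae_ae_continuousAt_intervalCode _)⟩

theorem measurePreserving_projIcc :
    MeasurePreserving (projIcc (0 : ℝ) 1 zero_le_one) (volume.restrict (Ioo 0 1)) volume := by
  refine ⟨continuous_projIcc.measurable, ?_⟩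
  rw [Measure.restrict_congr_set Ioo_ae_eq_Icc, ← unitInterval.measurePreserving_coe.map_eq,
    Measure.map_map continuous_projIcc.measurable measurable_subtype_coe]
  have hcoe : projIcc (0 : ℝ) 1 zero_le_one ∘ ((↑) : I → ℝ) = id :=
    funext (projIcc_val zero_le_one)
  rw [hcoe, Measure.map_id]

theorem exists_measurePreserving_volume_Ioo {Y : Type*} [MeasurableSpace Y]
    [StandardBorelSpace Y] [Nonempty Y] (μ : Measure Y) [IsProbabilityMeasure μ] :
    ∃ φ : ℝ → Y, MeasurePreserving φ (volume.restrict (Ioo 0 1)) μ := by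
  obtain ⟨f, hf, hfμ⟩ := μ.exists_measurable_map_eq
  exact ⟨_, MeasurePreserving.comp ⟨hf, hfμ⟩ measurePreserving_projIcc⟩

/-- Blackwell and Dubins' parametrized form of Skorokhod's representation theorem. -/
theorem exists_measurePreserving_ae_tendsto (X : Type*) [MetricSpace X]
    [SecondCountableTopology X] [Nonempty X] [MeasurableSpace X] [BorelSpace X]
    [StandardBorelSpace X] :
    ∃ ρ : ProbabilityMeasure X → ℝ → X,
      (∀ ν, MeasurePreserving (ρ ν) (volume.restrict (Ioo 0 1)) (ν : Measure X)) ∧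
      ∀ (νs : ℕ → ProbabilityMeasure X) (ν : ProbabilityMeasure X), Tendsto νs atTop (𝓝 ν) →
        ∀ᵐ u ∂volume.restrict (Ioo 0 1), Tendsto (fun n ↦ ρ (νs n) u) atTop (𝓝 (ρ ν u)) := by
  obtain ⟨ρ, hρ, hρ_tendsto⟩ := exists_measurePreserving_prod_ae_tendsto X
  obtain ⟨φ, hφ⟩ := exists_measurePreserving_volume_Ioo (volume : Measure (I × I))
  exact ⟨fun ν ↦ ρ ν ∘ φ, fun ν ↦ (hρ ν).comp hφ, fun νs ν h ↦
    hφ.quasiMeasurePreserving.ae (hρ_tendsto νs ν h)⟩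

end Skorokhod

section UniformIntegrability

variable {Ω E ι : Type*} [MeasurableSpace Ω] {P : Measure Ω} [NormedAddCommGroup E] {p q : ℝ≥0∞}

theorem unifIntegrable_of_eLpNorm_le (hpq : p < q) {f : ι → Ω → E}
    (hf : ∀ i, AEStronglyMeasurable (f i) P) {C : ℝ≥0∞} (hC : C ≠ ∞)
    (hfC : ∀ i, eLpNorm (f i) q P ≤ C) : UnifIntegrable f p P := by
  rcases eq_or_ne p 0 with rfl | hp
  · exact fun η _ ↦ ⟨1, one_pos, fun i s _ _ ↦ by simp⟩
  intro η hη
  have hexp : 0 < 1 / p.toReal - 1 / q.toReal := by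
    rw [sub_pos]
    rcases eq_or_ne q ∞ with rfl | hq
    · simpa using ENNReal.toReal_pos hp hpq.ne_top
    · exact one_div_lt_one_div_of_lt (ENNReal.toReal_pos hp hpq.ne_top)
        (ENNReal.toReal_strict_mono hq hpq)
  have hlim : Tendsto (fun δ : ℝ ↦ C * ENNReal.ofReal δ ^ (1 / p.toReal - 1 / q.toReal))
      (𝓝[>] 0) (𝓝 0) := by
    have hcont : Continuous fun δ : ℝ ↦
        C * ENNReal.ofReal δ ^ (1 / p.toReal - 1 / q.toReal) :=
      (ENNReal.continuous_const_mul hC).comp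
        (ENNReal.continuous_rpow_const.comp ENNReal.continuous_ofReal)
    refine (hcont.tendsto' 0 0 ?_).mono_left nhdsWithin_le_nhds
    simp only [ENNReal.ofReal_zero, ENNReal.zero_rpow_of_pos hexp, mul_zero]
  obtain ⟨δ, hδη, hδ⟩ :=
    ((hlim.eventually_lt_const (ENNReal.ofReal_pos.2 hη)).and self_mem_nhdsWithin).exists
  refine ⟨δ, hδ, fun i s hs hPs ↦ ?_⟩
  calc eLpNorm (s.indicator (f i)) p P
      = eLpNorm (f i) p (P.restrict s) := eLpNorm_indicator_eq_eLpNorm_restrict hs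
    _ ≤ eLpNorm (f i) q (P.restrict s) * P s ^ (1 / p.toReal - 1 / q.toReal) := by
        simpa using eLpNorm_le_eLpNorm_mul_rpow_measure_univ hpq.le (hf i).restrict
    _ ≤ C * ENNReal.ofReal δ ^ (1 / p.toReal - 1 / q.toReal) := by
        gcongr
        exact (eLpNorm_restrict_le _ _ _ _).trans (hfC i)
    _ ≤ ENNReal.ofReal η := hδη.le

theorem eLpNorm_le_of_measurePreserving [MeasurableSpace E] [OpensMeasurableSpace E] {r : ℝ}
    (hr : 0 < r) {ν : Measure E} {f : Ω → E} (hf : MeasurePreserving f P ν) {C : ℝ≥0∞}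
    (hC : ∫⁻ x, ‖x‖ₑ ^ r ∂ν ≤ C) :
    eLpNorm f (ENNReal.ofReal r) P ≤ C ^ (1 / r) := by
  have hnorm : Measurable fun x : E ↦ ‖x‖ₑ ^ r := by fun_prop
  rw [eLpNorm_eq_lintegral_rpow_enorm_toReal (ENNReal.ofReal_pos.2 hr).ne' ENNReal.ofReal_ne_top,
    ENNReal.toReal_ofReal hr.le, hf.lintegral_comp hnorm]
  gcongr

theorem continuous_toLp_of_eLpNorm_le {A : Type*} [TopologicalSpace A] [SequentialSpace A]
    [IsFiniteMeasure P] [Fact (1 ≤ p)] (hpq : p < q) {f : A → Ω → E} (hfp : ∀ a, MemLp (f a) p P)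
    {C : ℝ≥0∞} (hC : C ≠ ∞) (hfC : ∀ a, eLpNorm (f a) q P ≤ C)
    (hf : ∀ (as : ℕ → A) (a : A), Tendsto as atTop (𝓝 a) →
      ∀ᵐ ω ∂P, Tendsto (fun n ↦ f (as n) ω) atTop (𝓝 (f a ω))) :
    Continuous fun a ↦ (hfp a).toLp := by
  refine continuous_iff_seqContinuous.2 fun as a ha ↦ ?_
  have hunif : UnifIntegrable (fun n ↦ f (as n)) p P :=
    unifIntegrable_of_eLpNorm_le hpq (fun n ↦ (hfp _).aestronglyMeasurable) hC fun n ↦ hfC _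
  exact (Lp.tendsto_Lp_iff_tendsto_eLpNorm'' _ (fun n ↦ hfp (as n)) _ (hfp a)).2 <|
    tendsto_Lp_finite_of_tendsto_ae Fact.out hpq.ne_top (fun n ↦ (hfp _).aestronglyMeasurable)
      (hfp a) hunif (hf as a ha)

end UniformIntegrability

/-- The set `𝔓` of probability measures on `E` whose `q`-th moment is at most `C`, with the
topology of weak convergence. -/
abbrev MomentBoundedMeasure (E : Type*) [NormedAddCommGroup E] [MeasurableSpace E]
    (q : ℝ) (C : ℝ≥0∞) : Type _ :=
  {ν : ProbabilityMeasure E // ∫⁻ x, (‖x‖₊ : ℝ≥0∞) ^ q ∂(ν : Measure E) ≤ C}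

theorem continuous_L2_representation_general {E : Type*} [NormedAddCommGroup E]
    [SecondCountableTopology E] [MeasurableSpace E] [BorelSpace E] [StandardBorelSpace E]
    (p : ℝ≥0∞) [Fact (1 ≤ p)] {q : ℝ} (hpq : p < ENNReal.ofReal q) {C : ℝ≥0∞} (hC : C ≠ ∞) :
    ∃ T : MomentBoundedMeasure E q C → Lp E p (volume.restrict (Ioo (0 : ℝ) 1)),
      Continuous T ∧
      ∀ ν, Measure.map (T ν) (volume.restrict (Ioo (0 : ℝ) 1)) = (ν.1 : Measure E) := by
  obtain ⟨ρ, hρ, hρ_tendsto⟩ := exists_measurePreserving_ae_tendsto E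
  have hq : 0 < q := ENNReal.ofReal_pos.1 (pos_of_gt hpq)
  have hCq : C ^ (1 / q) ≠ ∞ := ENNReal.rpow_ne_top_of_nonneg (by positivity) hC
  have hρC (ν : MomentBoundedMeasure E q C) :
      eLpNorm (ρ ν) (ENNReal.ofReal q) (volume.restrict (Ioo 0 1)) ≤ C ^ (1 / q) :=
    eLpNorm_le_of_measurePreserving hq (hρ ν) ν.2
  have hρp (ν : MomentBoundedMeasure E q C) : MemLp (ρ ν) p (volume.restrict (Ioo 0 1)) :=
    MemLp.mono_exponent ⟨(hρ ν).measurable.aestronglyMeasurable, (hρC ν).trans_lt hCq.lt_top⟩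
      hpq.le
  refine ⟨fun ν ↦ (hρp ν).toLp, ?_, fun ν ↦ ?_⟩
  · exact continuous_toLp_of_eLpNorm_le hpq hρp hCq hρC fun νs ν h ↦
      hρ_tendsto _ _ ((continuous_subtype_val.tendsto ν).comp h)
  · rw [Measure.map_congr (hρp ν).coeFn_toLp, (hρ ν).map_eq]

/-- **Continuous selection of L² representatives on moment-bounded sets.** On the set `𝔓` of
Borel probability measures on `ℝ^d` with `(2+ε)`-moment bounded by `C₀` (with the topology of
weak convergence), there is a continuous map `T : 𝔓 → L²((0,1);ℝ^d)` such that the representative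
of `T(ν)` pushes the Lebesgue measure on `(0,1)` forward to `ν`. -/
theorem continuous_L2_representation
    (d : ℕ) (C₀ ε : ℝ) (hC₀ : 0 < C₀) (hε : 0 < ε) :
    ∃ T : {ν : ProbabilityMeasure (EuclideanSpace ℝ (Fin d)) //
            ∫⁻ x, (‖x‖₊ : ℝ≥0∞) ^ ((2:ℝ) + ε)
              ∂(ν : Measure (EuclideanSpace ℝ (Fin d))) ≤ ENNReal.ofReal C₀} →
          Lp (EuclideanSpace ℝ (Fin d)) 2 (volume.restrict (Set.Ioo (0:ℝ) 1)),
      Continuous T ∧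
      ∀ ν, Measure.map (⇑(T ν)) (volume.restrict (Set.Ioo (0:ℝ) 1)) =
        ((ν : ProbabilityMeasure (EuclideanSpace ℝ (Fin d))) :
          Measure (EuclideanSpace ℝ (Fin d))) :=
  continuous_L2_representation_general 2
    ((ENNReal.lt_ofReal_iff_toReal_lt ENNReal.ofNat_ne_top).2 (by simpa)) ENNReal.ofReal_ne_top

end
end
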